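/- arXiv:2008.06829 — 4 statements merged into one kernel-verified Lean document; each statement's English description precedes it below -/
import Mathlib

section
/- There exists a constant C > 0 such that for every real ε > 0 and every positive integer k with πεk ≤ 9/20, the Laplace slender-body PDE eigenvalue λ = 2π²εk·K₁(πεk)/K₀(πεk) and the Laplace slender-body approximation eigenvalue λ^SB = −2π/(log(πεk/2) + γ) satisfy |λ − λ^SB| ≤ C·ε²·k². -/
open Real

/-- Modified Bessel function of the second kind of order `j`:
`K_j(z) = ∫₀^∞ exp (−z cosh t) * cosh (j t) dt`. -/
noncomputable def besselK (j : ℕ) (z : ℝ) : ℝ :=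
  ∫ t in Set.Ioi (0 : ℝ), Real.exp (-z * Real.cosh t) * Real.cosh ((j : ℝ) * t)

open Set Filter Topology MeasureTheory

namespace SlenderAux

lemma bound_cosh (n : ℕ) {z : ℝ} (hz : 0 < z) (t : ℝ) :
    Real.exp (-z * Real.cosh t) * Real.cosh t ^ n
      ≤ (((n+1).factorial : ℝ) / z ^ (n+1) * 2) * Real.exp (-t) := by
  have hc : 0 < Real.cosh t := Real.cosh_pos t
  have h1 := Real.pow_div_factorial_le_exp (x := z * Real.cosh t) (by positivity) (n+1)
  have h2 : Real.exp t ≤ 2 * Real.cosh t := by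
    rw [Real.cosh_eq]; linarith [Real.exp_pos (-t)]
  have hf : (0:ℝ) < (n+1).factorial := by positivity
  rw [div_le_iff₀ hf] at h1
  rw [neg_mul, Real.exp_neg, Real.exp_neg, div_mul_eq_mul_div, ← div_eq_mul_inv, div_div,
    inv_mul_eq_div, div_le_div_iff₀ (by positivity) (by positivity)]
  have h3 : (z * Real.cosh t)^(n+1) = Real.cosh t ^ n * z^(n+1) * Real.cosh t := by
    rw [mul_pow, pow_succ (Real.cosh t)]; ring
  rw [h3] at h1
  calc Real.cosh t ^ n * (z ^ (n+1) * Real.exp t)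
      ≤ Real.cosh t ^ n * (z ^ (n+1) * (2 * Real.cosh t)) := by gcongr
    _ = 2 * (Real.cosh t ^ n * z^(n+1) * Real.cosh t) := by ring
    _ ≤ 2 * (Real.exp (z * Real.cosh t) * (n+1).factorial) := by gcongr
    _ = _ := by ring

lemma integrable_cosh (n : ℕ) {z : ℝ} (hz : 0 < z) :
    IntegrableOn (fun t => Real.exp (-z * Real.cosh t) * Real.cosh t ^ n) (Ioi 0) := by
  refine Integrable.mono' ((integrableOn_exp_neg_Ioi 0).const_mul
    (((n+1).factorial : ℝ) / z ^ (n+1) * 2)) ?_ ?_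
  · exact Continuous.aestronglyMeasurable (by fun_prop)
  · refine Eventually.of_forall fun t => ?_
    have hc : 0 < Real.cosh t := Real.cosh_pos t
    rw [Real.norm_of_nonneg (by positivity)]
    exact bound_cosh n hz t

lemma tendsto_cosh (n : ℕ) {z : ℝ} (hz : 0 < z) :
    Tendsto (fun t => Real.exp (-z * Real.cosh t) * Real.cosh t ^ n) atTop (𝓝 0) := by
  have h : Tendsto (fun t:ℝ => (((n+1).factorial : ℝ) / z ^ (n+1) * 2) * Real.exp (-t))
      atTop (𝓝 0) := by
    simpa using (Real.tendsto_exp_neg_atTop_nhds_zero).const_mul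
      (((n+1).factorial : ℝ) / z ^ (n+1) * 2)
  refine squeeze_zero (fun t => ?_) (fun t => bound_cosh n hz t) h
  have hc : 0 < Real.cosh t := Real.cosh_pos t
  positivity

/-- Moments. -/
noncomputable def P (n : ℕ) (z : ℝ) : ℝ :=
  ∫ t in Ioi (0 : ℝ), Real.exp (-z * Real.cosh t) * Real.cosh t ^ n

lemma besselK_zero (z : ℝ) : besselK 0 z = P 0 z := by
  simp [besselK, P]

lemma besselK_one (z : ℝ) : besselK 1 z = P 1 z := by
  simp [besselK, P]

lemma hasDerivAt_P (n : ℕ) {z : ℝ} (hz : 0 < z) : HasDerivAt (P n) (-P (n+1) z) z := by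
  have := (hasDerivAt_integral_of_dominated_loc_of_deriv_le (μ := volume.restrict (Ioi (0:ℝ)))
    (F := fun z t => Real.exp (-z * Real.cosh t) * Real.cosh t ^ n)
    (F' := fun z t => -(Real.exp (-z * Real.cosh t) * Real.cosh t ^ (n+1)))
    (bound := fun t => Real.exp (-(z/2) * Real.cosh t) * Real.cosh t ^ (n+1))
    (x₀ := z) (s := Ioi (z/2)) (Ioi_mem_nhds (by linarith))
    (Eventually.of_forall fun x => Continuous.aestronglyMeasurable (by fun_prop))
    (integrable_cosh n hz) (Continuous.aestronglyMeasurable (by fun_prop)) ?_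
    (integrable_cosh (n+1) (by linarith)) ?_).2
  · rw [integral_neg] at this
    exact this
  · refine Eventually.of_forall fun t x hx => ?_
    have hc : 0 < Real.cosh t := Real.cosh_pos t
    have hx : z/2 < x := hx
    rw [norm_neg, Real.norm_of_nonneg (by positivity)]
    gcongr
  · refine Eventually.of_forall fun t x hx => ?_
    have := ((((hasDerivAt_id x).neg).mul_const (Real.cosh t)).exp).mul_const (Real.cosh t ^ n)
    refine this.congr_deriv ?_
    simp only [Pi.neg_apply, id]
    ring

lemma P_pos {z : ℝ} (n : ℕ) (hz : 0 < z) : 0 < P n z := by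
  unfold P
  rw [setIntegral_pos_iff_support_of_nonneg_ae]
  · have : (Function.support fun t => Real.exp (-z * Real.cosh t) * Real.cosh t ^ n) = univ := by
      ext t
      have hc : 0 < Real.cosh t := Real.cosh_pos t
      simp only [Function.mem_support, mem_univ, iff_true]
      positivity
    rw [this]; simp
  · refine Eventually.of_forall fun t => ?_
    have hc : 0 < Real.cosh t := Real.cosh_pos t
    simp only [Pi.zero_apply]
    positivity
  · exact integrable_cosh n hz

lemma hasDerivAt_expcosh (z t : ℝ) : HasDerivAt (fun t => Real.exp (-z * Real.cosh t))
    (Real.exp (-z * Real.cosh t) * (-z * Real.sinh t)) t :=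
  ((Real.hasDerivAt_cosh t).const_mul (-z)).exp

lemma sinh_le_cosh (t : ℝ) : Real.sinh t ≤ Real.cosh t := by
  rw [Real.cosh_eq, Real.sinh_eq]; linarith [Real.exp_pos (-t)]

lemma abs_sinh_le_cosh (t : ℝ) : |Real.sinh t| ≤ Real.cosh t := by
  rw [abs_le, Real.cosh_eq, Real.sinh_eq]
  constructor <;> linarith [Real.exp_pos (-t), Real.exp_pos t]

lemma P_rec {z : ℝ} (hz : 0 < z) : P 1 z = z * P 2 z - z * P 0 z := by
  have hi : IntegrableOn (fun t => Real.exp (-z * Real.cosh t) * Real.cosh t ^ 1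
      - (z * (Real.exp (-z * Real.cosh t) * Real.cosh t ^ 2)
        - z * (Real.exp (-z * Real.cosh t) * Real.cosh t ^ 0))) (Ioi 0) :=
    (integrable_cosh 1 hz).sub (((integrable_cosh 2 hz).const_mul z).sub
      ((integrable_cosh 0 hz).const_mul z))
  have hl : Tendsto (fun t => Real.exp (-z * Real.cosh t) * Real.sinh t) atTop (𝓝 0) := by
    refine squeeze_zero_norm (fun t => ?_) (tendsto_cosh 1 hz)
    rw [norm_mul, Real.norm_of_nonneg (Real.exp_pos _).le, pow_one]
    gcongr
    exact abs_sinh_le_cosh t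
  have h := integral_Ioi_of_hasDerivAt_of_tendsto' (a := (0:ℝ))
    (f := fun t => Real.exp (-z * Real.cosh t) * Real.sinh t) (m := 0) (fun t _ => ?_) hi hl
  · rw [integral_sub (integrable_cosh 1 hz), integral_sub, integral_const_mul,
      integral_const_mul] at h
    · simp only [Real.sinh_zero, mul_zero, sub_zero] at h
      unfold P
      linarith
    · exact (integrable_cosh 2 hz).const_mul z
    · exact (integrable_cosh 0 hz).const_mul z
    · exact ((integrable_cosh 2 hz).const_mul z).sub ((integrable_cosh 0 hz).const_mul z)
  · have := (hasDerivAt_expcosh z t).mul (Real.hasDerivAt_sinh t)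
    refine this.congr_deriv ?_
    have := Real.cosh_sq t
    rw [this]
    ring

lemma hasDerivAt_zP {z : ℝ} (hz : 0 < z) :
    HasDerivAt (fun z => z * P 1 z) (-(z * P 0 z)) z := by
  have := (hasDerivAt_id z).mul (hasDerivAt_P 1 hz)
  refine this.congr_deriv ?_
  rw [P_rec hz]; simp only [id]; ring

lemma integrable_sinh {z : ℝ} (hz : 0 < z) :
    IntegrableOn (fun t => Real.exp (-z * Real.cosh t) * (-z * Real.sinh t)) (Ioi 0) := by
  refine Integrable.mono' ((integrable_cosh 1 hz).const_mul z) ?_ ?_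
  · exact Continuous.aestronglyMeasurable (by fun_prop)
  · refine Eventually.of_forall fun t => ?_
    rw [norm_mul, Real.norm_of_nonneg (Real.exp_pos _).le, norm_mul, norm_neg,
      Real.norm_of_nonneg hz.le]
    have := abs_sinh_le_cosh t
    calc _ = z * (Real.exp (-z * Real.cosh t) * |Real.sinh t|) := by rw [Real.norm_eq_abs]; ring
      _ ≤ _ := by rw [pow_one]; gcongr

lemma integral_sinh {z : ℝ} (hz : 0 < z) :
    ∫ t in Ioi (0:ℝ), Real.exp (-z * Real.cosh t) * (-z * Real.sinh t) = -Real.exp (-z) := by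
  have hl : Tendsto (fun t => Real.exp (-z * Real.cosh t)) atTop (𝓝 0) := by
    simpa using tendsto_cosh 0 hz
  have h := integral_Ioi_of_hasDerivAt_of_tendsto' (a := (0:ℝ))
    (fun t _ => hasDerivAt_expcosh z t) (integrable_sinh hz) hl
  simpa using h

lemma zP_bounds {z : ℝ} (hz : 0 < z) :
    Real.exp (-z) ≤ z * P 1 z ∧ z * P 1 z ≤ Real.exp (-z) + z := by
  have hs := integral_sinh hz
  have e1 : z * P 1 z - Real.exp (-z) = ∫ t in Ioi (0:ℝ),
      (z * (Real.exp (-z * Real.cosh t) * Real.cosh t ^ 1)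
        + Real.exp (-z * Real.cosh t) * (-z * Real.sinh t)) := by
    rw [integral_add ((integrable_cosh 1 hz).const_mul z) (integrable_sinh hz), hs,
      integral_const_mul]
    rfl
  have e2 : ∀ t, (z * (Real.exp (-z * Real.cosh t) * Real.cosh t ^ 1)
        + Real.exp (-z * Real.cosh t) * (-z * Real.sinh t))
        = Real.exp (-z * Real.cosh t) * (z * Real.exp (-t)) := by
    intro t
    rw [← Real.cosh_sub_sinh]; ring
  simp_rw [e2] at e1
  have hb : ∀ t, Real.exp (-z * Real.cosh t) * (z * Real.exp (-t)) ≤ z * Real.exp (-t) := by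
    intro t
    have hc : 0 < Real.cosh t := Real.cosh_pos t
    refine mul_le_of_le_one_left (by positivity) ?_
    rw [Real.exp_le_one_iff, neg_mul]
    have : 0 < z * Real.cosh t := by positivity
    linarith
  constructor
  · have : 0 ≤ z * P 1 z - Real.exp (-z) := by
      rw [e1]
      exact integral_nonneg fun t => by positivity
    linarith
  · have : z * P 1 z - Real.exp (-z) ≤ z := by
      rw [e1]
      calc _ ≤ ∫ t in Ioi (0:ℝ), z * Real.exp (-t) := by
            refine integral_mono_of_nonneg (Eventually.of_forall fun t => ?_)
              ((integrableOn_exp_neg_Ioi 0).const_mul z) (Eventually.of_forall hb)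
            simp only [Pi.zero_apply]
            positivity
        _ = z := by rw [integral_const_mul, integral_exp_neg_Ioi_zero, mul_one]
    linarith

lemma tendsto_zP : Tendsto (fun z => z * P 1 z) (𝓝[>] 0) (𝓝 1) := by
  have h1 : Tendsto (fun z:ℝ => Real.exp (-z)) (𝓝[>] 0) (𝓝 1) := by
    have : Continuous (fun z:ℝ => Real.exp (-z)) := by fun_prop
    simpa using (this.tendsto 0).mono_left nhdsWithin_le_nhds
  have h2 : Tendsto (fun z:ℝ => Real.exp (-z) + z) (𝓝[>] 0) (𝓝 1) := by
    have : Continuous (fun z:ℝ => Real.exp (-z) + z) := by fun_prop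
    simpa using (this.tendsto 0).mono_left nhdsWithin_le_nhds
  refine tendsto_of_tendsto_of_tendsto_of_le_of_le' h1 h2 ?_ ?_
  · filter_upwards [self_mem_nhdsWithin] with z hz using (zP_bounds hz).1
  · filter_upwards [self_mem_nhdsWithin] with z hz using (zP_bounds hz).2

lemma integral_log_exp : ∫ u in Ioi (0:ℝ), Real.log u * Real.exp (-u)
    = -Real.eulerMascheroniConstant := by
  have h1 := Complex.hasDerivAt_GammaIntegral (s := 1) (by simp)
  have h2 : HasDerivAt Complex.Gamma
      (∫ t : ℝ in Ioi 0, (t:ℂ) ^ ((1:ℂ) - 1) * (Real.log t * Real.exp (-t))) 1 := by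
    refine h1.congr_of_eventuallyEq ?_
    have : {s : ℂ | 0 < s.re} ∈ 𝓝 (1:ℂ) :=
      (isOpen_lt continuous_const Complex.continuous_re).mem_nhds (by simp)
    filter_upwards [this] with s hs using Complex.Gamma_eq_integral hs
  have h3 := h2.unique Complex.hasDerivAt_Gamma_one
  simp only [sub_self, Complex.cpow_zero, one_mul] at h3
  have h4 : (∫ t : ℝ in Ioi 0, ((Real.log t : ℂ) * (Real.exp (-t) : ℂ)))
      = ((∫ u in Ioi (0:ℝ), Real.log u * Real.exp (-u) : ℝ) : ℂ) := by
    rw [← integral_complex_ofReal]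
    simp
  rw [h4] at h3
  exact_mod_cast h3

lemma integrable_log_exp : IntegrableOn (fun u => Real.log u * Real.exp (-u)) (Ioi 0) := by
  refine Integrable.of_integral_ne_zero ?_
  rw [integral_log_exp]
  have := Real.one_half_lt_eulerMascheroniConstant
  exact (by linarith : -Real.eulerMascheroniConstant < 0).ne

lemma integrable_exp_div {a : ℝ} (ha : 0 < a) :
    IntegrableOn (fun u => Real.exp (-u) / u) (Ioi a) := by
  refine Integrable.mono' ((integrableOn_exp_neg_Ioi a).const_mul a⁻¹) ?_ ?_
  · exact Measurable.aestronglyMeasurable (by fun_prop)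
  · refine (ae_restrict_mem measurableSet_Ioi).mono fun u hu => ?_
    have hu : a < u := hu
    have hu0 : 0 < u := ha.trans hu
    rw [Real.norm_of_nonneg (by positivity), div_eq_inv_mul]
    gcongr

lemma exp_div_eq {a : ℝ} (ha : 0 < a) : ∫ u in Ioi a, Real.exp (-u) / u
    = (∫ u in Ioi a, Real.log u * Real.exp (-u)) - Real.log a * Real.exp (-a) := by
  have hi2 : IntegrableOn (fun u => Real.log u * Real.exp (-u)) (Ioi a) :=
    integrable_log_exp.mono_set (Ioi_subset_Ioi ha.le)
  have hl : Tendsto (fun u => Real.log u * Real.exp (-u)) atTop (𝓝 0) := by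
    have h := Real.tendsto_pow_mul_exp_neg_atTop_nhds_zero 1
    refine squeeze_zero' ?_ ?_ h
    · filter_upwards [eventually_ge_atTop 1] with u hu
      have := Real.log_nonneg hu
      positivity
    · filter_upwards [eventually_ge_atTop 1] with u hu
      have := Real.log_le_self (by linarith : 0 ≤ u)
      rw [pow_one]
      gcongr
  have h := integral_Ioi_of_hasDerivAt_of_tendsto' (a := a)
    (f := fun u => Real.log u * Real.exp (-u)) (m := 0)
    (f' := fun u => Real.exp (-u) / u - Real.log u * Real.exp (-u)) (fun t ht => ?_)
    ((integrable_exp_div ha).sub hi2) hl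
  · rw [integral_sub (integrable_exp_div ha) hi2] at h
    linarith
  · have ht0 : t ≠ 0 := (ha.trans_le ht).ne'
    have := (Real.hasDerivAt_log ht0).mul ((hasDerivAt_id t).neg.exp)
    refine this.congr_deriv ?_
    simp only [Pi.neg_apply, id]
    ring

lemma integrable_expexp {a : ℝ} (ha : 0 < a) :
    IntegrableOn (fun t => Real.exp (-(a * Real.exp t))) (Ioi 0) := by
  refine Integrable.mono' (integrable_cosh 0 ha) ?_ ?_
  · exact Continuous.aestronglyMeasurable (by fun_prop)
  · refine (ae_restrict_mem measurableSet_Ioi).mono fun t ht => ?_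
    have ht : 0 < t := ht
    rw [Real.norm_of_nonneg (by positivity), pow_zero, mul_one, neg_mul]
    have : Real.cosh t ≤ Real.exp t := by
      rw [Real.cosh_eq]
      have : Real.exp (-t) ≤ Real.exp t := Real.exp_le_exp.2 (by linarith)
      linarith
    gcongr

lemma expexp_eq {a : ℝ} (ha : 0 < a) : ∫ t in Ioi (0:ℝ), Real.exp (-(a * Real.exp t))
    = ∫ u in Ioi a, Real.exp (-u) / u := by
  have e : (fun t => ((fun u => Real.exp (-u) / u) ∘ fun t => a * Real.exp t) t
      * (a * Real.exp t)) = fun t => Real.exp (-(a * Real.exp t)) := by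
    ext t
    simp only [Function.comp]
    have := Real.exp_pos t
    field_simp
  have h := integral_comp_mul_deriv_Ioi (a := 0) (f := fun t => a * Real.exp t)
    (f' := fun t => a * Real.exp t) (g := fun u => Real.exp (-u) / u)
    (by fun_prop) (Real.tendsto_exp_atTop.const_mul_atTop ha)
    (fun x _ => ((Real.hasDerivAt_exp x).const_mul a).hasDerivWithinAt) ?_ ?_ ?_
  · rw [e] at h
    simpa using h
  · rintro u ⟨t, _, rfl⟩
    have : 0 < a * Real.exp t := by positivity
    exact ContinuousAt.continuousWithinAt
      (ContinuousAt.div (by fun_prop) (by fun_prop) this.ne')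
  · refine ((integrableOn_Ici_iff_integrableOn_Ioi (by simp)).2 (integrable_exp_div ha)).mono_set ?_
    rintro u ⟨t, ht, rfl⟩
    have ht : 0 ≤ t := ht
    have := Real.one_le_exp ht
    simp only [mem_Ici]
    nlinarith
  · rw [e, integrableOn_Ici_iff_integrableOn_Ioi]
    exact integrable_expexp ha

lemma P_zero_bounds {z : ℝ} (hz : 0 < z) :
    (∫ u in Ioi (z/2), Real.exp (-u) / u) - z/2 ≤ P 0 z ∧
      P 0 z ≤ ∫ u in Ioi (z/2), Real.exp (-u) / u := by
  have ha : 0 < z/2 := by linarith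
  rw [← expexp_eq ha]
  have hi := integrable_expexp ha
  have e : ∀ t, Real.exp (-z * Real.cosh t) * Real.cosh t ^ 0
      = Real.exp (-(z/2 * Real.exp t)) * Real.exp (-(z/2 * Real.exp (-t))) := by
    intro t
    rw [← Real.exp_add, pow_zero, mul_one, Real.cosh_eq]
    congr 1; ring
  constructor
  · have hj : IntegrableOn (fun t => Real.exp (-(z/2 * Real.exp t)) - z/2 * Real.exp (-t))
      (Ioi 0) := hi.sub ((integrableOn_exp_neg_Ioi 0).const_mul (z/2))
    have : ∫ t in Ioi (0:ℝ), (Real.exp (-(z/2 * Real.exp t)) - z/2 * Real.exp (-t)) ≤ P 0 z := by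
      refine integral_mono hj (integrable_cosh 0 hz) fun t => ?_
      simp only [e]
      have h1 := Real.add_one_le_exp (-(z/2 * Real.exp (-t)))
      have h2 : Real.exp (-(z/2 * Real.exp t)) ≤ 1 := by
        rw [Real.exp_le_one_iff]
        have : 0 < z/2 * Real.exp t := by positivity
        linarith
      have h3 := Real.exp_pos (-(z/2 * Real.exp t))
      have h4 : 0 < z/2 * Real.exp (-t) := by positivity
      nlinarith
    rw [integral_sub hi ((integrableOn_exp_neg_Ioi 0).const_mul (z/2)), integral_const_mul,
      integral_exp_neg_Ioi_zero, mul_one] at this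
    exact this
  · refine integral_mono (integrable_cosh 0 hz) hi fun t => ?_
    simp only [e]
    refine mul_le_of_le_one_right (Real.exp_pos _).le ?_
    rw [Real.exp_le_one_iff]
    have : 0 < z/2 * Real.exp (-t) := by positivity
    linarith

lemma tendsto_E1 : Tendsto (fun a => (∫ u in Ioi a, Real.exp (-u) / u) + Real.log a) (𝓝[>] 0)
    (𝓝 (-Real.eulerMascheroniConstant)) := by
  have h1 : Tendsto (fun a => ∫ u in Ioi a, Real.log u * Real.exp (-u)) (𝓝[>] 0)
      (𝓝 (-Real.eulerMascheroniConstant)) := by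
    have hc : Tendsto (fun a => ∫ u in (0:ℝ)..a, Real.log u * Real.exp (-u)) (𝓝[>] 0)
        (𝓝 0) := by
      have hii : IntegrableOn (fun u => Real.log u * Real.exp (-u)) (uIcc 0 1) := by
        rw [uIcc_of_le zero_le_one, integrableOn_Icc_iff_integrableOn_Ioc]
        exact integrable_log_exp.mono_set Ioc_subset_Ioi_self
      have := intervalIntegral.continuousOn_primitive_interval hii
      have := this 0 (by simp)
      rw [uIcc_of_le zero_le_one] at this
      have h0 := this.tendsto
      rw [intervalIntegral.integral_same] at h0
      refine h0.mono_left ?_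
      exact nhdsWithin_le_of_mem (mem_of_superset (Ioc_mem_nhdsGT zero_lt_one) Ioc_subset_Icc_self)
    have := (tendsto_const_nhds (x := -Real.eulerMascheroniConstant)).sub hc
    rw [sub_zero] at this
    refine this.congr' ?_
    filter_upwards [self_mem_nhdsWithin] with a ha
    have ha : 0 < a := ha
    rw [← integral_log_exp, ← intervalIntegral.integral_Ioi_sub_Ioi integrable_log_exp ha.le]
    ring
  have h2 : Tendsto (fun a => Real.log a * (1 - Real.exp (-a))) (𝓝[>] 0) (𝓝 0) := by
    have h := tendsto_log_mul_rpow_nhdsGT_zero zero_lt_one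
    simp only [Real.rpow_one] at h
    refine squeeze_zero_norm' ?_ (by simpa using h.abs)
    filter_upwards [self_mem_nhdsWithin] with a ha
    have ha : 0 < a := ha
    rw [norm_mul, Real.norm_eq_abs, Real.norm_eq_abs, abs_of_pos ha]
    gcongr
    rw [abs_of_nonneg]
    · linarith [Real.add_one_le_exp (-a)]
    · have := Real.exp_le_one_iff.2 (by linarith : -a ≤ 0)
      linarith
  have := h1.add h2
  rw [add_zero] at this
  refine this.congr' ?_
  filter_upwards [self_mem_nhdsWithin] with a ha
  rw [exp_div_eq ha]; ring

lemma tendsto_P_zero : Tendsto (fun z => P 0 z + Real.log z) (𝓝[>] 0)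
    (𝓝 (Real.log 2 - Real.eulerMascheroniConstant)) := by
  have hh : Tendsto (fun z:ℝ => z/2) (𝓝[>] 0) (𝓝[>] 0) := by
    refine tendsto_nhdsWithin_iff.2 ⟨?_, ?_⟩
    · have : Continuous (fun z:ℝ => z/2) := by fun_prop
      simpa using (this.tendsto 0).mono_left nhdsWithin_le_nhds
    · filter_upwards [self_mem_nhdsWithin] with z hz
      exact half_pos (mem_Ioi.1 hz)
  have h1 := (tendsto_E1.comp hh).add_const (Real.log 2)
  have h2 := h1.sub (hh.mono_right nhdsWithin_le_nhds)
  rw [sub_zero, neg_add_eq_sub] at h2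
  rw [neg_add_eq_sub] at h1
  refine tendsto_of_tendsto_of_tendsto_of_le_of_le' h2 h1 ?_ ?_
  · filter_upwards [self_mem_nhdsWithin] with z hz
    have hz : 0 < z := hz
    have := (P_zero_bounds hz).1
    simp only [Function.comp]
    rw [Real.log_div hz.ne' two_ne_zero]
    linarith
  · filter_upwards [self_mem_nhdsWithin] with z hz
    have hz : 0 < z := hz
    have := (P_zero_bounds hz).2
    simp only [Function.comp]
    rw [Real.log_div hz.ne' two_ne_zero]
    linarith

lemma lim_le {f f' : ℝ → ℝ} {c : ℝ} (hd : ∀ x, 0 < x → HasDerivAt f (f' x) x)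
    (hn : ∀ x, 0 < x → x < 1 → 0 ≤ f' x) (hl : Tendsto f (𝓝[>] 0) (𝓝 c)) :
    MonotoneOn f (Ioc 0 1) ∧ ∀ x, 0 < x → x ≤ 1 → c ≤ f x := by
  have hm : MonotoneOn f (Ioc 0 1) := by
    refine monotoneOn_of_deriv_nonneg (convex_Ioc 0 1)
      (fun x hx => (hd x hx.1).continuousAt.continuousWithinAt) ?_ ?_
    · rw [interior_Ioc]
      exact fun x hx => (hd x hx.1).differentiableAt.differentiableWithinAt
    · rw [interior_Ioc]
      intro x hx
      rw [(hd x hx.1).deriv]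
      exact hn x hx.1 hx.2
  refine ⟨hm, fun x hx hx1 => ?_⟩
  refine le_of_tendsto hl ?_
  filter_upwards [Ioc_mem_nhdsGT hx] with y hy
  exact hm ⟨hy.1, hy.2.trans hx1⟩ ⟨hx, hx1⟩ hy.2

lemma tendsto_sq_log (a b : ℝ) :
    Tendsto (fun z : ℝ => z^2 * (a - b * Real.log z)) (𝓝[>] 0) (𝓝 0) := by
  have h := tendsto_log_mul_rpow_nhdsGT_zero zero_lt_one
  simp only [Real.rpow_one] at h
  have hz : Tendsto (fun z : ℝ => z) (𝓝[>] 0) (𝓝 0) := nhdsWithin_le_nhds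
  have := ((hz.mul hz).mul_const a).sub ((hz.mul h).const_mul b)
  simp only [mul_zero, zero_mul, sub_zero] at this
  refine this.congr fun z => ?_
  ring

lemma hasDerivAt_sq_log (a b : ℝ) {z : ℝ} (hz : 0 < z) :
    HasDerivAt (fun z : ℝ => z^2 * (a - b * Real.log z))
      (2 * z * (a - b * Real.log z) - b * z) z := by
  have := ((hasDerivAt_id z).pow 2).mul
    (((Real.hasDerivAt_log hz.ne').const_mul b).const_sub a)
  refine this.congr_deriv ?_
  simp only [Pi.pow_apply, id]
  field_simp
  simp
  ring

lemma zP_le_one {z : ℝ} (hz : 0 < z) (h1 : z ≤ 1) : z * P 1 z ≤ 1 := by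
  have := (lim_le (f := fun z => -(z * P 1 z)) (fun x hx => (hasDerivAt_zP hx).neg)
    (fun x hx _ => by
      have := P_pos 0 hx
      rw [neg_neg]; positivity) tendsto_zP.neg).2 z hz h1
  linarith

lemma K0_facts : MonotoneOn (fun z => P 0 z + Real.log z) (Ioc 0 1) ∧ ∀ z, 0 < z → z ≤ 1 →
    Real.log 2 - Real.eulerMascheroniConstant ≤ P 0 z + Real.log z := by
  refine lim_le (f' := fun z => -P 1 z + z⁻¹)
    (fun x hx => (hasDerivAt_P 0 hx).add (Real.hasDerivAt_log hx.ne')) ?_ tendsto_P_zero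
  intro x hx hx1
  have := zP_le_one hx hx1.le
  have h : P 1 x ≤ x⁻¹ := by
    rw [← one_div, le_div_iff₀ hx]; linarith
  linarith

lemma K0_upper {z : ℝ} (hz : 0 < z) (h1 : z ≤ 1) : P 0 z ≤ P 0 1 - Real.log z := by
  have := K0_facts.1 ⟨hz, h1⟩ ⟨one_pos, le_rfl⟩ h1
  simp only [Real.log_one] at this
  linarith

lemma zP_lower {z : ℝ} (hz : 0 < z) (h1 : z ≤ 1) :
    1 - z^2 * ((P 0 1 + 1)/2 - 1 * Real.log z) ≤ z * P 1 z := by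
  have := (lim_le (fun x hx => (hasDerivAt_zP hx).add (hasDerivAt_sq_log ((P 0 1 + 1)/2) 1 hx))
    (fun x hx hx1 => by
      have h := K0_upper hx hx1.le
      have h2 := Real.log_nonpos hx.le hx1.le
      nlinarith) (tendsto_zP.add (tendsto_sq_log _ _))).2 z hz h1
  simp only [Pi.add_apply] at this
  linarith

lemma K0_upper2 {z : ℝ} (hz : 0 < z) (h1 : z ≤ 1) :
    P 0 z + Real.log z ≤ Real.log 2 - Real.eulerMascheroniConstant
      + z^2 * ((P 0 1 + 2)/4 - 1/2 * Real.log z) := by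
  have := (lim_le (f := fun z => z^2 * ((P 0 1 + 2)/4 - 1/2 * Real.log z)
      - (P 0 z + Real.log z))
    (fun x hx => (hasDerivAt_sq_log ((P 0 1 + 2)/4) (1/2) hx).sub
      ((hasDerivAt_P 0 hx).add (Real.hasDerivAt_log hx.ne')))
    (fun x hx hx1 => by
      have h := zP_lower hx hx1.le
      have h3 : x⁻¹ - x * ((P 0 1 + 1)/2 - 1 * Real.log x) ≤ P 1 x := by
        rw [← sub_nonneg] at h ⊢
        have : P 1 x - (x⁻¹ - x * ((P 0 1 + 1)/2 - 1 * Real.log x))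
          = (x * P 1 x - (1 - x^2 * ((P 0 1 + 1)/2 - 1 * Real.log x))) / x := by
          field_simp
        rw [this]
        positivity
      simp only [zero_add]
      nlinarith) ((tendsto_sq_log _ _).sub tendsto_P_zero)).2 z hz h1
  linarith

lemma key {z : ℝ} (hz : 0 < z) (h1 : z ≤ 9/20) :
    |z * (P 1 z / P 0 z) + 1 / (Real.log (z/2) + Real.eulerMascheroniConstant)|
      ≤ (2 * P 0 1 + 5) * z^2 := by
  have hz1 : z ≤ 1 := by linarith
  set B := P 0 1 with hB
  have hBp : 0 < B := P_pos 0 one_pos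
  set L := Real.log 2 - Real.eulerMascheroniConstant - Real.log z with hL
  have hLL : Real.log (z/2) + Real.eulerMascheroniConstant = -L := by
    rw [Real.log_div hz.ne' two_ne_zero, hL]; ring
  have hg := Real.eulerMascheroniConstant_lt_two_thirds
  have hl2 := Real.log_two_gt_d9
  have hlz : Real.log z ≤ -Real.log 2 := by
    rw [← Real.log_inv]
    exact Real.log_le_log hz (by norm_num; linarith)
  have hLh : 1/2 ≤ L := by linarith
  have hLlog : -Real.log z ≤ L := by linarith
  have hK : L ≤ P 0 z := by have := K0_facts.2 z hz hz1; linarith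
  have hK2 : P 0 z ≤ L + z^2 * ((B + 2)/4 - 1/2 * Real.log z) := by
    have := K0_upper2 hz hz1; linarith
  have hf := zP_le_one hz hz1
  have hf2 := zP_lower hz hz1
  rw [← hB] at hf2
  have hLp : 0 < L := by linarith
  have hKp : 0 < P 0 z := P_pos 0 hz
  rw [hLL]
  have e : z * (P 1 z / P 0 z) + 1 / (-L) = -((P 0 z - L * (z * P 1 z)) / (L * P 0 z)) := by
    field_simp
    ring
  rw [e, abs_neg, abs_of_nonneg]
  · rw [div_le_iff₀ (by positivity)]
    have s1 : z^2 * ((B + 2)/4 - 1/2 * Real.log z) ≤ z^2 * ((B+2)/4 + 1/2 * L) := by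
      gcongr; linarith
    have s2 : z^2 * ((B+1)/2 - 1 * Real.log z) ≤ z^2 * ((B+1)/2 + L) := by
      gcongr; linarith
    have s3 : P 0 z - L * (z * P 1 z) ≤
        z^2 * ((B+2)/4 + 1/2 * L) + L * (z^2 * ((B+1)/2 + L)) := by
      nlinarith
    have s4 : ((B+2)/4 + 1/2 * L) + L * ((B+1)/2 + L) ≤ (2 * B + 5) * (L * L) := by
      have q1 : 1 ≤ 4 * (L * L) := by nlinarith
      have q2 : L ≤ 2 * (L * L) := by nlinarith
      nlinarith
    calc _ ≤ z^2 * (((B+2)/4 + 1/2 * L) + L * ((B+1)/2 + L)) := by linarith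
      _ ≤ z^2 * ((2 * B + 5) * (L * L)) := by gcongr
      _ = (2 * B + 5) * z^2 * (L * L) := by ring
      _ ≤ _ := by gcongr
  · apply div_nonneg _ (by positivity)
    nlinarith

end SlenderAux

theorem laplace_eigenvalue_difference :
    ∃ C : ℝ, 0 < C ∧ ∀ ε : ℝ, 0 < ε → ∀ k : ℕ, 1 ≤ k → π * ε * (k : ℝ) ≤ 9 / 20 →
      |2 * π ^ 2 * ε * (k : ℝ) *
            (besselK 1 (π * ε * (k : ℝ)) / besselK 0 (π * ε * (k : ℝ))) -
          -(2 * π) / (Real.log (π * ε * (k : ℝ) / 2) + Real.eulerMascheroniConstant)| ≤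
        C * ε ^ 2 * (k : ℝ) ^ 2 := by
  have hB : 0 < SlenderAux.P 0 1 := SlenderAux.P_pos 0 one_pos
  have hpi := Real.pi_pos
  refine ⟨2 * π ^ 3 * (2 * SlenderAux.P 0 1 + 5), by positivity, ?_⟩
  intro ε hε k hk h
  have hk0 : (0:ℝ) < k := by exact_mod_cast hk
  have hz : 0 < π * ε * (k:ℝ) := by positivity
  have key := SlenderAux.key hz h
  rw [SlenderAux.besselK_zero, SlenderAux.besselK_one]
  set z := π * ε * (k:ℝ) with hzd
  have e : 2 * π ^ 2 * ε * (k : ℝ) * (SlenderAux.P 1 z / SlenderAux.P 0 z) -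
      -(2 * π) / (Real.log (z / 2) + Real.eulerMascheroniConstant)
      = 2 * π * (z * (SlenderAux.P 1 z / SlenderAux.P 0 z)
        + 1 / (Real.log (z/2) + Real.eulerMascheroniConstant)) := by
    rw [hzd]; ring
  rw [e, abs_mul, abs_of_pos (by positivity : 0 < 2 * π)]
  calc _ ≤ 2 * π * ((2 * SlenderAux.P 0 1 + 5) * z^2) := by gcongr
    _ = _ := by rw [hzd]; ring
end

section
/- There exists a constant C > 0 such that for every real ε > 0 and every positive integer k with πεk ≤ 1/4, writing K_j = K_j(πεk), the tangential Stokes slender-body PDE eigenvalue λᵗ = 4π²εk·K₁² / (2K₀K₁ + πεk·(K₀² − K₁²)) and the tangential slender-body approximation eigenvalue λ^{SB,t} = −4π/(1 + 2·log(πεk/2) + 2γ) satisfy |λᵗ − λ^{SB,t}| ≤ C·ε²·k². -/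
open Real

open MeasureTheory Set Filter Topology

/-- Moments `∫₀^∞ cosh^n t exp (-z cosh t) dt`. -/
noncomputable def coshMoment (n : ℕ) (z : ℝ) : ℝ :=
  ∫ t in Set.Ioi (0 : ℝ), Real.cosh t ^ n * Real.exp (-z * Real.cosh t)

lemma coshMoment_bound (n : ℕ) {z : ℝ} (hz : 0 < z) (t : ℝ) :
    Real.cosh t ^ n * Real.exp (-z * Real.cosh t) ≤
      (2 * ((n + 1).factorial / z ^ (n + 1))) * Real.exp (-t) := by
  have hc : 0 < Real.cosh t := Real.cosh_pos t
  have h1 := Real.pow_div_factorial_le_exp (z * Real.cosh t) (by positivity) (n + 1)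
  have h2 : Real.exp t ≤ 2 * Real.cosh t := by
    rw [Real.cosh_eq]; linarith [Real.exp_pos (-t)]
  have hf : (0 : ℝ) < (n + 1).factorial := by positivity
  rw [div_le_iff₀ hf] at h1
  have e1 : Real.exp (-z * Real.cosh t) = (Real.exp (z * Real.cosh t))⁻¹ := by
    rw [← Real.exp_neg]; ring_nf
  rw [e1, Real.exp_neg]
  rw [← div_eq_mul_inv, ← div_eq_mul_inv, div_le_div_iff₀ (Real.exp_pos _) (Real.exp_pos _)]
  calc Real.cosh t ^ n * Real.exp t ≤ Real.cosh t ^ n * (2 * Real.cosh t) := by gcongr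
    _ = 2 * ((z * Real.cosh t) ^ (n + 1) / z ^ (n + 1)) := by
      rw [mul_pow, pow_succ (Real.cosh t)]; field_simp
    _ ≤ 2 * ((Real.exp (z * Real.cosh t) * (n + 1).factorial) / z ^ (n + 1)) := by gcongr
    _ = _ := by ring

lemma coshMoment_integrable (n : ℕ) {z : ℝ} (hz : 0 < z) :
    IntegrableOn (fun t => Real.cosh t ^ n * Real.exp (-z * Real.cosh t)) (Ioi 0) := by
  refine Integrable.mono' ((integrableOn_exp_neg_Ioi 0).const_mul
    (2 * ((n + 1).factorial / z ^ (n + 1)))) ?_ ?_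
  · have : Continuous (fun t => Real.cosh t ^ n * Real.exp (-z * Real.cosh t)) := by fun_prop
    exact this.aestronglyMeasurable
  · refine Eventually.of_forall fun t => ?_
    have hc : 0 < Real.cosh t := Real.cosh_pos t
    rw [Real.norm_of_nonneg (by positivity)]
    exact coshMoment_bound n hz t

lemma coshMoment_hasDerivAt (n : ℕ) {z : ℝ} (hz : 0 < z) :
    HasDerivAt (coshMoment n) (-coshMoment (n + 1) z) z := by
  have key := hasDerivAt_integral_of_dominated_loc_of_deriv_le (μ := volume.restrict (Ioi (0 : ℝ)))
    (F := fun z t => Real.cosh t ^ n * Real.exp (-z * Real.cosh t))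
    (F' := fun z t => -(Real.cosh t ^ (n + 1) * Real.exp (-z * Real.cosh t)))
    (x₀ := z) (s := Ioi (z / 2))
    (bound := fun t => Real.cosh t ^ (n + 1) * Real.exp (-(z / 2) * Real.cosh t))
    (Ioi_mem_nhds (by linarith)) ?_ (coshMoment_integrable n hz) ?_ ?_
    (coshMoment_integrable (n + 1) (half_pos hz)) ?_
  · have := key.2
    rw [integral_neg] at this
    exact this
  · refine Eventually.of_forall fun x => ?_
    have : Continuous (fun t => Real.cosh t ^ n * Real.exp (-x * Real.cosh t)) := by fun_prop
    exact this.aestronglyMeasurable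
  · exact (coshMoment_integrable (n + 1) hz).aestronglyMeasurable.neg
  · refine Eventually.of_forall fun t x hx => ?_
    have hc : 0 < Real.cosh t := Real.cosh_pos t
    rw [norm_neg, Real.norm_of_nonneg (by positivity)]
    have : z / 2 < x := hx
    gcongr
  · refine Eventually.of_forall fun t x hx => ?_
    have h1 : HasDerivAt (fun x : ℝ => -x * Real.cosh t) (-1 * Real.cosh t) x :=
      ((hasDerivAt_id x).neg).mul_const _
    have h2 := (h1.exp).const_mul (Real.cosh t ^ n)
    refine h2.congr_deriv ?_
    ring

lemma tendsto_coshExp (n : ℕ) {z : ℝ} (hz : 0 < z) :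
    Tendsto (fun t => Real.cosh t ^ n * Real.exp (-z * Real.cosh t)) atTop (𝓝 0) := by
  refine squeeze_zero (fun t => by have := Real.cosh_pos t; positivity)
    (fun t => coshMoment_bound n hz t) ?_
  have := (Real.tendsto_exp_neg_atTop_nhds_zero).const_mul
    (2 * ((n + 1).factorial / z ^ (n + 1)) : ℝ)
  simpa using this

lemma coshMoment_rec {z : ℝ} (hz : 0 < z) :
    coshMoment 1 z = z * coshMoment 2 z - z * coshMoment 0 z := by
  have i0 := coshMoment_integrable 0 hz
  have i1 := coshMoment_integrable 1 hz
  have i2 := coshMoment_integrable 2 hz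
  have h := integral_Ioi_of_hasDerivAt_of_tendsto' (a := 0) (m := 0)
    (f := fun t => Real.sinh t * Real.exp (-z * Real.cosh t))
    (f' := fun t => Real.cosh t ^ 1 * Real.exp (-z * Real.cosh t) -
      z * (Real.cosh t ^ 2 * Real.exp (-z * Real.cosh t)) +
      z * (Real.cosh t ^ 0 * Real.exp (-z * Real.cosh t))) ?_
    ((i1.sub (i2.const_mul z)).add (i0.const_mul z)) ?_
  · have i12 : IntegrableOn (fun t => Real.cosh t ^ 1 * Real.exp (-z * Real.cosh t) -
      z * (Real.cosh t ^ 2 * Real.exp (-z * Real.cosh t))) (Ioi 0) := i1.sub (i2.const_mul z)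
    rw [integral_add i12 (i0.const_mul z),
      integral_sub i1 (i2.const_mul z), integral_const_mul, integral_const_mul] at h
    simp only [Real.sinh_zero, zero_mul, sub_zero] at h
    unfold coshMoment
    linarith
  · intro t _
    have h1 : HasDerivAt (fun t => -z * Real.cosh t) (-z * Real.sinh t) t :=
      (Real.hasDerivAt_cosh t).const_mul _
    refine ((Real.hasDerivAt_sinh t).mul h1.exp).congr_deriv ?_
    have := Real.cosh_sq t
    have h3 : Real.sinh t ^ 2 = Real.cosh t ^ 2 - 1 := by linarith
    have : Real.sinh t * (Real.exp (-z * Real.cosh t) * (-z * Real.sinh t)) =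
      -z * Real.sinh t ^ 2 * Real.exp (-z * Real.cosh t) := by ring
    rw [this, h3]; ring
  · refine squeeze_zero_norm (fun t => ?_) (tendsto_coshExp 1 hz)
    rw [norm_mul, Real.norm_of_nonneg (Real.exp_pos _).le, pow_one]
    gcongr
    rw [Real.norm_eq_abs, Real.abs_sinh]
    calc Real.sinh |t| ≤ Real.cosh |t| := (Real.sinh_lt_cosh _).le
      _ = _ := Real.cosh_abs t

lemma besselK_zero_eq (z : ℝ) : besselK 0 z = coshMoment 0 z := by
  simp [besselK, coshMoment]

lemma besselK_one_eq (z : ℝ) : besselK 1 z = coshMoment 1 z := by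
  simp [besselK, coshMoment, mul_comm]

lemma coshMoment_nonneg (n : ℕ) (z : ℝ) : 0 ≤ coshMoment n z := by
  refine integral_nonneg fun t => ?_
  have := Real.cosh_pos t
  positivity

/-- lower and upper bounds for `z K₁`. -/
lemma zK1_lower {z : ℝ} (hz : 0 < z) :
    Real.exp (-z) ≤ z * coshMoment 1 z ∧
      z * coshMoment 1 z ≤ Real.exp (-z) + z * coshMoment 0 z := by
  have i0 := coshMoment_integrable 0 hz
  have i1 := coshMoment_integrable 1 hz
  have hd : ∀ t ∈ Ici (0 : ℝ), HasDerivAt (fun t => -Real.exp (-z * Real.cosh t))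
      (z * Real.sinh t * Real.exp (-z * Real.cosh t)) t := by
    intro t _
    have h1 : HasDerivAt (fun t => -z * Real.cosh t) (-z * Real.sinh t) t :=
      (Real.hasDerivAt_cosh t).const_mul _
    exact h1.exp.neg.congr_deriv (by ring)
  have hp : ∀ t ∈ Ioi (0 : ℝ), 0 ≤ z * Real.sinh t * Real.exp (-z * Real.cosh t) := by
    intro t ht
    have : 0 ≤ Real.sinh t := Real.sinh_nonneg_iff.2 (le_of_lt ht)
    positivity
  have ht : Tendsto (fun t => -Real.exp (-z * Real.cosh t)) atTop (𝓝 0) := by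
    simpa using (tendsto_coshExp 0 hz).neg
  have hi := integrableOn_Ioi_deriv_of_nonneg' hd hp ht
  have he := integral_Ioi_of_hasDerivAt_of_nonneg' hd hp ht
  simp only [Real.cosh_zero, mul_one, sub_neg_eq_add, zero_add] at he
  rw [← he]
  unfold coshMoment
  rw [← integral_const_mul, ← integral_const_mul, ← integral_add hi (i0.const_mul z)]
  constructor
  · refine integral_mono hi (i1.const_mul z) fun t => ?_
    have := (Real.sinh_lt_cosh t).le
    simp only [pow_one, mul_assoc]
    gcongr
  · refine setIntegral_mono_on (i1.const_mul z) (hi.add (i0.const_mul z)) measurableSet_Ioi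
      fun t ht => ?_
    have h1 : Real.cosh t ≤ Real.sinh t + 1 := by
      have := Real.cosh_sub_sinh t
      have h2 : Real.exp (-t) ≤ 1 := Real.exp_le_one_iff.2 (by have : 0 < t := ht; linarith)
      linarith
    have : z * (Real.cosh t ^ 1 * Real.exp (-z * Real.cosh t)) ≤
       z * ((Real.sinh t + 1) * Real.exp (-z * Real.cosh t)) := by
      rw [pow_one]; gcongr
    calc _ ≤ _ := this
      _ = _ := by ring

lemma mono_limit {f f' : ℝ → ℝ} {z l : ℝ} (hz : 0 < z)
    (hd : ∀ x ∈ Ioc 0 z, HasDerivAt f (f' x) x) (hp : ∀ x ∈ Ioc 0 z, 0 ≤ f' x)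
    (hl : Tendsto f (𝓝[>] 0) (𝓝 l)) : l ≤ f z := by
  have hm : MonotoneOn f (Ioc 0 z) := by
    refine monotoneOn_of_deriv_nonneg (convex_Ioc 0 z)
      (fun x hx => (hd x hx).continuousAt.continuousWithinAt)
      (fun x hx => (hd x (interior_subset hx)).differentiableAt.differentiableWithinAt)
      fun x hx => ?_
    rw [(hd x (interior_subset hx)).deriv]
    exact hp x (interior_subset hx)
  refine le_of_tendsto hl ?_
  filter_upwards [Ioc_mem_nhdsGT hz] with x hx
  exact hm hx ⟨hz, le_rfl⟩ hx.2

lemma log_exp_integral :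
    IntegrableOn (fun t => Real.log t * Real.exp (-t)) (Ioi 0) ∧
    ∫ t in Ioi (0 : ℝ), Real.log t * Real.exp (-t) = -Real.eulerMascheroniConstant := by
  have h1 := Complex.hasDerivAt_GammaIntegral (s := 1) (by simp)
  have h2 : Complex.Gamma =ᶠ[𝓝 1] Complex.GammaIntegral := by
    have : IsOpen {s : ℂ | 0 < s.re} := Complex.continuous_re.isOpen_preimage _ isOpen_Ioi
    filter_upwards [this.mem_nhds (by simp : (1 : ℂ) ∈ _)] with s hs
    exact Complex.Gamma_eq_integral hs
  have h3 := (h1.congr_of_eventuallyEq h2).unique Complex.hasDerivAt_Gamma_one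
  simp only [sub_self, Complex.cpow_zero, one_mul] at h3
  constructor
  · by_contra hc
    have : ¬ IntegrableOn (fun t : ℝ => ((Real.log t : ℂ) * (Real.exp (-t) : ℂ))) (Ioi 0) := by
      intro h
      apply hc
      have := h.re
      simpa [← Complex.ofReal_mul, IntegrableOn, -Complex.ofReal_exp] using this
    rw [integral_undef this] at h3
    have hpos := Real.one_half_lt_eulerMascheroniConstant
    have : Real.eulerMascheroniConstant = 0 := by
      simpa using h3.symm
    linarith
  · have : ((∫ t in Ioi (0 : ℝ), Real.log t * Real.exp (-t) : ℝ) : ℂ) =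
      ((-Real.eulerMascheroniConstant : ℝ) : ℂ) := by
      rw [← integral_complex_ofReal]
      simp only [Complex.ofReal_mul, Complex.ofReal_neg]
      exact h3
    exact_mod_cast this

/-- The exponential integral `E₁(w)`, in exponential coordinates. -/
noncomputable def expE (w : ℝ) : ℝ := ∫ t in Ioi (0 : ℝ), Real.exp (-w * Real.exp t)

lemma expE_integrable {w : ℝ} (hw : 0 < w) :
    IntegrableOn (fun t => Real.exp (-w * Real.exp t)) (Ioi 0) := by
  refine Integrable.mono' ((integrableOn_exp_neg_Ioi 0).const_mul w⁻¹) ?_ ?_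
  · have : Continuous (fun t => Real.exp (-w * Real.exp t)) := by fun_prop
    exact this.aestronglyMeasurable
  · refine Eventually.of_forall fun t => ?_
    rw [Real.norm_of_nonneg (Real.exp_pos _).le, neg_mul, Real.exp_neg, Real.exp_neg, ← mul_inv]
    have h0 : 0 < w * Real.exp t := by positivity
    have := Real.add_one_le_exp (w * Real.exp t)
    exact inv_anti₀ h0 (by linarith)

lemma expE_sub {w : ℝ} (hw : 0 < w) :
    IntegrableOn (fun x => Real.exp (-x) / x) (Ioi w) ∧
    expE w = ∫ x in Ioi w, Real.exp (-x) / x := by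
  have hi : IntegrableOn (fun x => Real.exp (-x) / x) (Ioi w) := by
    refine Integrable.mono' ((integrableOn_exp_neg_Ioi w).const_mul w⁻¹) ?_ ?_
    · have : ContinuousOn (fun x => Real.exp (-x) / x) (Ioi w) := by
        refine ContinuousOn.div (by fun_prop) (by fun_prop) fun x hx => ?_
        exact (hw.trans hx).ne'
      exact this.aestronglyMeasurable measurableSet_Ioi
    · filter_upwards [ae_restrict_mem measurableSet_Ioi] with x hx
      have hx' : w < x := hx
      have : 0 < x := hw.trans hx'
      rw [Real.norm_of_nonneg (by positivity), div_eq_inv_mul]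
      gcongr
  refine ⟨hi, ?_⟩
  have e : ∀ t : ℝ, ((fun x => Real.exp (-x) / x) ∘ (fun t => w * Real.exp t)) t *
      (w * Real.exp t) = Real.exp (-w * Real.exp t) := by
    intro t
    have : w * Real.exp t ≠ 0 := by positivity
    simp only [Function.comp]
    rw [div_mul_cancel₀ _ this, neg_mul]
  have := integral_comp_mul_deriv_Ioi (a := 0) (f := fun t => w * Real.exp t)
    (f' := fun t => w * Real.exp t) (g := fun x => Real.exp (-x) / x)
    (by fun_prop) (Real.tendsto_exp_atTop.const_mul_atTop hw)
    (fun x _ => ((Real.hasDerivAt_exp x).const_mul w).hasDerivWithinAt) ?_ ?_ ?_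
  · simp only [e, Real.exp_zero, mul_one] at this
    exact this
  · refine ContinuousOn.div (by fun_prop) (by fun_prop) ?_
    rintro x ⟨t, _, rfl⟩
    positivity
  · refine ((integrableOn_Ici_iff_integrableOn_Ioi (by simp)).2 hi).mono_set ?_
    rintro x ⟨t, ht, rfl⟩
    have : 1 ≤ Real.exp t := Real.one_le_exp ht
    show w ≤ w * Real.exp t
    nlinarith
  · simp only [e]
    exact (integrableOn_Ici_iff_integrableOn_Ioi (by simp)).2 (expE_integrable hw)

lemma tendsto_log_mul_exp_neg :
    Tendsto (fun x => Real.log x * Real.exp (-x)) atTop (𝓝 0) := by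
  have h := Real.tendsto_pow_mul_exp_neg_atTop_nhds_zero 1
  refine squeeze_zero' ?_ ?_ h
  · filter_upwards [eventually_ge_atTop 1] with x hx
    have := Real.log_nonneg hx
    positivity
  · filter_upwards [eventually_ge_atTop 1] with x hx
    have := Real.log_le_sub_one_of_pos (by linarith : 0 < x)
    rw [pow_one]
    gcongr
    linarith

lemma expE_eq {w : ℝ} (hw : 0 < w) :
    expE w = -(Real.log w * Real.exp (-w)) + ∫ x in Ioi w, Real.log x * Real.exp (-x) := by
  obtain ⟨hi, he⟩ := expE_sub hw
  have hl : IntegrableOn (fun t => Real.log t * Real.exp (-t)) (Ioi w) :=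
    log_exp_integral.1.mono_set (Ioi_subset_Ioi hw.le)
  have h := integral_Ioi_of_hasDerivAt_of_tendsto' (a := w) (m := 0)
    (f := fun x => Real.log x * Real.exp (-x))
    (f' := fun x => Real.exp (-x) / x - Real.log x * Real.exp (-x)) ?_
    (hi.sub hl) tendsto_log_mul_exp_neg
  · rw [integral_sub hi hl] at h
    rw [he]; linarith
  · intro x hx
    have hx0 : x ≠ 0 := (lt_of_lt_of_le hw hx).ne'
    refine ((Real.hasDerivAt_log hx0).mul (hasDerivAt_neg x).exp).congr_deriv ?_
    field_simp
    ring

lemma tendsto_mul_log : Tendsto (fun x : ℝ => x * Real.log x) (𝓝[>] 0) (𝓝 0) := by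
  have := (Real.continuous_mul_log.tendsto 0).mono_left (nhdsWithin_le_nhds (s := Ioi 0))
  simpa using this

lemma tendsto_expE :
    Tendsto (fun w => expE w + Real.log w) (𝓝[>] 0) (𝓝 (-Real.eulerMascheroniConstant)) := by
  have h1 : Tendsto (fun w => ∫ x in Ioi w, Real.log x * Real.exp (-x)) (𝓝[>] 0)
      (𝓝 (-Real.eulerMascheroniConstant)) := by
    have := log_exp_integral.1.continuousWithinAt_Ici_primitive_Ioi.mono_left
      (nhdsWithin_mono 0 Ioi_subset_Ici_self)
    rw [← log_exp_integral.2]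
    exact this
  have h2 : Tendsto (fun w => Real.log w * (1 - Real.exp (-w))) (𝓝[>] 0) (𝓝 0) := by
    refine squeeze_zero_norm' ?_ (tendsto_norm_zero.comp tendsto_mul_log)
    filter_upwards [self_mem_nhdsWithin] with w hw
    have hw : 0 < w := hw
    simp only [Function.comp, norm_mul]
    rw [mul_comm]
    have : Real.exp (-w) ≤ 1 := Real.exp_le_one_iff.2 (by linarith)
    have h3 := Real.add_one_le_exp (-w)
    rw [Real.norm_of_nonneg (by linarith : 0 ≤ 1 - Real.exp (-w)), Real.norm_of_nonneg hw.le]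
    gcongr
    linarith
  have := h2.add h1
  rw [zero_add] at this
  refine this.congr' ?_
  filter_upwards [self_mem_nhdsWithin] with w hw
  rw [expE_eq hw]; ring

lemma tendsto_id_gt : Tendsto (fun x : ℝ => x) (𝓝[>] 0) (𝓝 0) :=
  tendsto_id.mono_left nhdsWithin_le_nhds

lemma tendsto_mul_expE : Tendsto (fun w => w * expE w) (𝓝[>] 0) (𝓝 0) := by
  have := (tendsto_id_gt.mul tendsto_expE).sub tendsto_mul_log
  simp only [zero_mul, sub_zero] at this
  refine this.congr fun w => ?_
  ring

lemma K0_bounds {z : ℝ} (hz : 0 < z) :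
    (1 - z / 2) * expE (z / 2) ≤ coshMoment 0 z ∧ coshMoment 0 z ≤ expE (z / 2) := by
  have i0 := coshMoment_integrable 0 hz
  have iE := expE_integrable (half_pos hz)
  have e : ∀ t, -z * Real.cosh t = -(z / 2) * Real.exp t + -(z / 2) * Real.exp (-t) := by
    intro t; rw [Real.cosh_eq]; ring
  constructor
  · unfold expE coshMoment
    rw [← integral_const_mul]
    refine setIntegral_mono_on (iE.const_mul _) i0 measurableSet_Ioi fun t ht => ?_
    have h2 : Real.exp (-t) ≤ 1 := Real.exp_le_one_iff.2 (by have : 0 < t := ht; linarith)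
    have h3 := Real.add_one_le_exp (-(z / 2) * Real.exp (-t))
    have h4 : 1 - z / 2 ≤ Real.exp (-(z / 2) * Real.exp (-t)) := by nlinarith
    rw [e, Real.exp_add, pow_zero, one_mul, mul_comm (Real.exp (-(z / 2) * Real.exp t))]
    gcongr
  · unfold expE coshMoment
    refine integral_mono i0 iE fun t => ?_
    simp only [pow_zero, one_mul]
    rw [e]
    have : 0 < z / 2 * Real.exp (-t) := by positivity
    exact Real.exp_le_exp.2 (by linarith)

lemma tendsto_half : Tendsto (fun z : ℝ => z / 2) (𝓝[>] 0) (𝓝[>] 0) := by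
  refine tendsto_nhdsWithin_iff.2 ⟨?_, ?_⟩
  · simpa using tendsto_id_gt.div_const 2
  · filter_upwards [self_mem_nhdsWithin] with z hz
    exact half_pos (show 0 < z from hz)

lemma tendsto_K0 : Tendsto (fun z => coshMoment 0 z + Real.log (z / 2) +
    Real.eulerMascheroniConstant) (𝓝[>] 0) (𝓝 0) := by
  have h1 := (tendsto_expE.comp tendsto_half).add_const Real.eulerMascheroniConstant
  have h2 := h1.sub (tendsto_mul_expE.comp tendsto_half)
  simp only [Function.comp, neg_add_cancel, sub_zero] at h1 h2
  refine tendsto_of_tendsto_of_tendsto_of_le_of_le' h2 h1 ?_ ?_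
  · filter_upwards [self_mem_nhdsWithin] with z hz
    linarith [(K0_bounds hz).1]
  · filter_upwards [self_mem_nhdsWithin] with z hz
    linarith [(K0_bounds hz).2]

lemma tendsto_zK0 : Tendsto (fun z => z * coshMoment 0 z) (𝓝[>] 0) (𝓝 0) := by
  have h1 := (tendsto_mul_expE.comp tendsto_half).const_mul 2
  simp only [Function.comp, mul_zero] at h1
  refine squeeze_zero' ?_ ?_ h1
  · filter_upwards [self_mem_nhdsWithin] with z hz
    have : 0 < z := hz
    have := coshMoment_nonneg 0 z
    positivity
  · filter_upwards [self_mem_nhdsWithin] with z hz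
    have h : 0 < z := hz
    nlinarith [(K0_bounds hz).2]

lemma tendsto_zK1 : Tendsto (fun z => z * coshMoment 1 z) (𝓝[>] 0) (𝓝 1) := by
  have h0 : Tendsto (fun z : ℝ => Real.exp (-z)) (𝓝[>] 0) (𝓝 1) := by
    have : Continuous (fun z : ℝ => Real.exp (-z)) := by fun_prop
    have := (this.tendsto 0).mono_left (nhdsWithin_le_nhds (s := Ioi 0))
    simpa using this
  have h1 := h0.add tendsto_zK0
  rw [add_zero] at h1
  refine tendsto_of_tendsto_of_tendsto_of_le_of_le' h0 h1 ?_ ?_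
  · filter_upwards [self_mem_nhdsWithin] with z hz
    exact (zK1_lower hz).1
  · filter_upwards [self_mem_nhdsWithin] with z hz
    exact (zK1_lower hz).2

lemma deriv_zK1 {z : ℝ} (hz : 0 < z) :
    HasDerivAt (fun z => z * coshMoment 1 z) (-(z * coshMoment 0 z)) z := by
  refine ((hasDerivAt_id z).mul (coshMoment_hasDerivAt 1 hz)).congr_deriv ?_
  have := coshMoment_rec hz
  simp only [id]
  linarith

/-- `L(z) = -(log (z/2) + γ)`, the leading part of `K₀`. -/
noncomputable def logL (z : ℝ) : ℝ := -(Real.log (z / 2) + Real.eulerMascheroniConstant)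

lemma deriv_logL {z : ℝ} (hz : 0 < z) : HasDerivAt logL (-z⁻¹) z := by
  have h1 : HasDerivAt (fun z : ℝ => z / 2) (1 / 2) z := (hasDerivAt_id z).div_const 2
  have h2 := ((h1.log (by positivity)).add_const Real.eulerMascheroniConstant).neg
  refine h2.congr_deriv ?_
  field_simp

lemma deriv_sq_logL {z : ℝ} (c : ℝ) (hz : 0 < z) :
    HasDerivAt (fun z => z ^ 2 * (logL z + c)) (2 * z * (logL z + c) - z) z := by
  refine ((hasDerivAt_pow 2 z).mul ((deriv_logL hz).add_const c)).congr_deriv ?_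
  field_simp
  ring

lemma tendsto_sq_logL (c : ℝ) :
    Tendsto (fun z => z ^ 2 * (logL z + c)) (𝓝[>] 0) (𝓝 0) := by
  have h1 := tendsto_id_gt.mul ((tendsto_mul_log.comp tendsto_half).const_mul 2)
  have h2 := (tendsto_id_gt.pow 2).mul_const (c - Real.eulerMascheroniConstant)
  have := h2.sub h1
  simp only [Function.comp] at this
  norm_num at this
  refine this.congr fun z => ?_
  unfold logL
  ring

lemma logL_ge {z : ℝ} (hz : 0 < z) (hz4 : z ≤ 1 / 4) : 5 / 4 ≤ logL z := by
  have h1 := Real.eulerMascheroniConstant_lt_two_thirds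
  have h2 : Real.log (z / 2) ≤ Real.log (1 / 8) := Real.log_le_log (by positivity) (by linarith)
  have h3 : Real.log (1 / 8) = -(3 * Real.log 2) := by
    rw [show (1 / 8 : ℝ) = (2 ^ 3)⁻¹ by norm_num, Real.log_inv, Real.log_pow]; norm_num
  have := Real.log_two_gt_d9
  unfold logL
  linarith

lemma deriv_h {z : ℝ} (hz : 0 < z) :
    HasDerivAt (fun z => coshMoment 0 z - logL z) ((1 - z * coshMoment 1 z) / z) z := by
  refine ((coshMoment_hasDerivAt 0 hz).sub (deriv_logL hz)).congr_deriv ?_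
  field_simp
  ring

lemma tendsto_h : Tendsto (fun z => coshMoment 0 z - logL z) (𝓝[>] 0) (𝓝 0) := by
  refine tendsto_K0.congr fun z => ?_
  unfold logL; ring

lemma zK1_le_one {z : ℝ} (hz : 0 < z) : z * coshMoment 1 z ≤ 1 := by
  have := mono_limit (f := fun z => -(z * coshMoment 1 z)) (l := -1) hz
    (fun x hx => (deriv_zK1 hx.1).neg) (fun x hx => ?_) tendsto_zK1.neg
  · linarith
  · have := coshMoment_nonneg 0 x
    have := hx.1
    rw [neg_neg]; positivity

lemma K0_ge {z : ℝ} (hz : 0 < z) : logL z ≤ coshMoment 0 z := by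
  have := mono_limit hz (fun x hx => deriv_h hx.1) (fun x hx => ?_) tendsto_h
  · linarith
  · exact div_nonneg (by linarith [zK1_le_one hx.1]) hx.1.le

lemma zK1_ge {z : ℝ} (hz : 0 < z) : 1 - z ≤ z * coshMoment 1 z := by
  linarith [(zK1_lower hz).1, Real.add_one_le_exp (-z)]

lemma K0_le {z : ℝ} (hz : 0 < z) : coshMoment 0 z ≤ logL z + z := by
  have hl := tendsto_id_gt.sub tendsto_h
  rw [sub_zero] at hl
  have := mono_limit hz (fun x hx => (hasDerivAt_id x).sub (deriv_h hx.1)) (fun x hx => ?_) hl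
  · simp only [Pi.sub_apply, id] at this
    linarith
  · rw [sub_nonneg, div_le_one hx.1]
    linarith [zK1_ge hx.1]

lemma zK1_ge' {z : ℝ} (hz : 0 < z) (hz4 : z ≤ 1 / 4) :
    1 - z ^ 2 * (logL z + 3 / 4) / 2 ≤ z * coshMoment 1 z := by
  have hl := tendsto_zK1.add ((tendsto_sq_logL (3 / 4)).div_const 2)
  rw [zero_div, add_zero] at hl
  have := mono_limit hz (fun x hx => (deriv_zK1 hx.1).add ((deriv_sq_logL (3 / 4) hx.1).div_const 2))
    (fun x hx => ?_) hl
  · simp only [Pi.add_apply] at this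
    linarith
  · have h1 := K0_le hx.1
    have h2 := hx.1
    have h3 := hx.2
    nlinarith

lemma K0_le' {z : ℝ} (hz : 0 < z) (hz4 : z ≤ 1 / 4) :
    coshMoment 0 z ≤ logL z + z ^ 2 * (logL z + 5 / 4) / 4 := by
  have hl := ((tendsto_sq_logL (5 / 4)).div_const 4).sub tendsto_h
  rw [zero_div, sub_zero] at hl
  have := mono_limit hz (fun x hx => ((deriv_sq_logL (5 / 4) hx.1).div_const 4).sub (deriv_h hx.1))
    (fun x hx => ?_) hl
  · simp only [Pi.sub_apply] at this
    linarith
  · have h1 := zK1_ge' hx.1 (hx.2.trans hz4)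
    have h2 := hx.1
    rw [sub_nonneg, div_le_iff₀ hx.1]
    nlinarith

lemma main_algebra {z a K L : ℝ} (hz : 0 < z) (hz4 : z ≤ 1 / 4) (hL : 5 / 4 ≤ L)
    (ha1 : a ≤ 1) (ha : 1 - z ≤ a) (ha' : 1 - z ^ 2 * (L + 3 / 4) / 2 ≤ a)
    (hK : L ≤ K) (hK' : K ≤ L + z ^ 2 * (L + 5 / 4) / 4) :
    |a ^ 2 / (2 * K * a + z ^ 2 * K ^ 2 - a ^ 2) - 1 / (2 * L - 1)| ≤ 11 * z ^ 2 := by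
  have hz2 : z ^ 2 ≤ 1 / 16 := by nlinarith
  have hz0 : 0 < z ^ 2 := by positivity
  have ha34 : 3 / 4 ≤ a := by linarith
  have hK2 : K ≤ L + z ^ 2 * L := by nlinarith
  have hKL : K ≤ 2 * L := by nlinarith
  have ha2 : 1 - z ^ 2 * L ≤ a := by nlinarith
  have hD : 3 / 4 * L ≤ 2 * K * a + z ^ 2 * K ^ 2 - a ^ 2 := by
    have h1 : 0 ≤ z ^ 2 * K ^ 2 := by positivity
    have h2 : 3 / 4 * L ≤ a * (2 * K - a) := by
      have : L ≤ 2 * K - a := by linarith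
      exact mul_le_mul ha34 this (by linarith) (by linarith)
    nlinarith
  have hM : L ≤ 2 * L - 1 := by linarith
  have hLpos : 0 < L := by linarith
  have hDpos : 0 < 2 * K * a + z ^ 2 * K ^ 2 - a ^ 2 := by nlinarith
  have hMpos : 0 < 2 * L - 1 := by linarith
  have hDM : 3 / 4 * L * L ≤ (2 * K * a + z ^ 2 * K ^ 2 - a ^ 2) * (2 * L - 1) :=
    mul_le_mul hD hM hLpos.le hDpos.le
  have e : a ^ 2 / (2 * K * a + z ^ 2 * K ^ 2 - a ^ 2) - 1 / (2 * L - 1) =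
      (2 * a * (a * L - K) - z ^ 2 * K ^ 2) /
        ((2 * K * a + z ^ 2 * K ^ 2 - a ^ 2) * (2 * L - 1)) := by
    rw [div_sub_div _ _ hDpos.ne' hMpos.ne']
    congr 1
    ring
  have hu : a * L - K ≤ 0 := by nlinarith
  have hl : -(2 * z ^ 2 * L ^ 2) ≤ a * L - K := by
    have h1 : (1 - z ^ 2 * L) * L ≤ a * L := by gcongr
    have h2 : z ^ 2 * L ≤ z ^ 2 * L ^ 2 := by
      have : L ≤ L ^ 2 := by nlinarith
      gcongr
    nlinarith
  have hK4 : z ^ 2 * K ^ 2 ≤ z ^ 2 * (2 * L) ^ 2 := by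
    have : 0 ≤ K := by linarith
    gcongr
  have hN : |2 * a * (a * L - K) - z ^ 2 * K ^ 2| ≤ 8 * z ^ 2 * L ^ 2 := by
    rw [abs_le]
    constructor
    · have : -(2 * z ^ 2 * L ^ 2) ≤ a * (a * L - K) := by nlinarith
      nlinarith
    · have h1 : a * (a * L - K) ≤ 0 := mul_nonpos_of_nonneg_of_nonpos (by linarith) hu
      have h2 : 0 ≤ z ^ 2 * K ^ 2 := by positivity
      have h3 : 0 ≤ z ^ 2 * L ^ 2 := by positivity
      nlinarith
  rw [e, abs_div, abs_of_pos (mul_pos hDpos hMpos), div_le_iff₀ (mul_pos hDpos hMpos)]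
  calc _ ≤ 8 * z ^ 2 * L ^ 2 := hN
    _ ≤ 11 * z ^ 2 * (3 / 4 * L * L) := by nlinarith [mul_pos hz0 (pow_pos hLpos 2)]
    _ ≤ _ := by gcongr

theorem stokes_tangential_eigenvalue_difference :
    ∃ C : ℝ, 0 < C ∧ ∀ ε : ℝ, 0 < ε → ∀ k : ℕ, 1 ≤ k → π * ε * (k : ℝ) ≤ 1 / 4 →
      |4 * π ^ 2 * ε * (k : ℝ) * (besselK 1 (π * ε * (k : ℝ))) ^ 2 /
            (2 * besselK 0 (π * ε * (k : ℝ)) * besselK 1 (π * ε * (k : ℝ)) +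
              π * ε * (k : ℝ) *
                ((besselK 0 (π * ε * (k : ℝ))) ^ 2 - (besselK 1 (π * ε * (k : ℝ))) ^ 2)) -
          -(4 * π) /
            (1 + 2 * Real.log (π * ε * (k : ℝ) / 2) + 2 * Real.eulerMascheroniConstant)| ≤
        C * ε ^ 2 * (k : ℝ) ^ 2 := by
  refine ⟨4 * π * 11 * π ^ 2, by positivity, ?_⟩
  intro ε hε k hk hz4
  have hk' : (0 : ℝ) < k := by exact_mod_cast hk
  have hz : 0 < π * ε * (k : ℝ) := by positivity
  rw [besselK_zero_eq, besselK_one_eq]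
  have e0 : 4 * π ^ 2 * ε * (k : ℝ) = 4 * π * (π * ε * (k : ℝ)) := by ring
  have e1 : 4 * π * 11 * π ^ 2 * ε ^ 2 * (k : ℝ) ^ 2 =
      4 * π * (11 * (π * ε * (k : ℝ)) ^ 2) := by ring
  rw [e0, e1]
  generalize π * ε * (k : ℝ) = z at *
  have key := main_algebra hz hz4 (logL_ge hz hz4) (zK1_le_one hz) (zK1_ge hz)
    (zK1_ge' hz hz4) (K0_ge hz) (K0_le' hz hz4)
  have hL := logL_ge hz hz4
  have e2 : 4 * π * z * coshMoment 1 z ^ 2 /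
      (2 * coshMoment 0 z * coshMoment 1 z +
        z * (coshMoment 0 z ^ 2 - coshMoment 1 z ^ 2)) =
      4 * π * ((z * coshMoment 1 z) ^ 2 / (2 * coshMoment 0 z * (z * coshMoment 1 z) +
        z ^ 2 * coshMoment 0 z ^ 2 - (z * coshMoment 1 z) ^ 2)) := by
    rw [← mul_div_assoc, ← mul_div_mul_left _ _ hz.ne']
    congr 1 <;> ring
  have e3 : -(4 * π) / (1 + 2 * Real.log (z / 2) + 2 * Real.eulerMascheroniConstant) =
      4 * π * (1 / (2 * logL z - 1)) := by
    have : 1 + 2 * Real.log (z / 2) + 2 * Real.eulerMascheroniConstant = -(2 * logL z - 1) := by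
      unfold logL; ring
    rw [this, neg_div_neg_eq]; ring
  rw [e2, e3, ← mul_sub, abs_mul, abs_of_pos (by positivity : 0 < 4 * π)]
  gcongr
end

section
/- There exists a constant C > 0 such that for every real ε > 0 and every positive integer k with πεk ≤ 73/100, writing K_j = K_j(πεk), the normal Stokes slender-body PDE eigenvalue λⁿ = 2π²εk·(4K₁²K₂ + πεk·K₁·(K₁² − K₀K₂)) / (2K₀K₁K₂ + πεk·(K₁²(K₀ + K₂) − 2K₀²K₂)) and the normal slender-body approximation eigenvalue λ^{SB,n} = 8π/(1 − 2·log(πεk/2) − 2γ) satisfy |λⁿ − λ^{SB,n}| ≤ C·ε²·k². -/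
open Real

open MeasureTheory Set Filter Topology

noncomputable def bj (n : ℕ) (z : ℝ) : ℝ :=
  ∫ t in Ioi (0 : ℝ), cosh t ^ n * exp (-z * cosh t)

lemma le_cosh_self' (t : ℝ) : t ≤ cosh t := by
  have h1 := Real.add_one_le_exp t
  have h3 := Real.quadratic_le_exp_of_nonneg (x := |t|) (abs_nonneg t)
  have : cosh t = cosh |t| := (cosh_abs t).symm
  rw [this, cosh_eq]
  have h2 := Real.add_one_le_exp (-|t|)
  have := le_abs_self t
  have := sq_abs t
  nlinarith [sq_nonneg (|t| - 2), sq_nonneg (|t|-1)]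

lemma bj_int (n : ℕ) {z : ℝ} (hz : 0 < z) :
    IntegrableOn (fun t => cosh t ^ n * exp (-z * cosh t)) (Ioi (0 : ℝ)) := by
  have h := (exp_neg_integrableOn_Ioi 0 (half_pos hz)).const_mul ((n.factorial : ℝ) * (2 / z) ^ n)
  refine Integrable.mono' h (by fun_prop) ?_
  refine ae_of_all _ fun t => ?_
  have hc := cosh_pos t
  rw [Real.norm_of_nonneg (by positivity)]
  have h1 := Real.pow_div_factorial_le_exp (z / 2 * cosh t) (by positivity) n
  have hf : (0 : ℝ) < n.factorial := by positivity
  have h2 : cosh t ^ n ≤ (n.factorial : ℝ) * (2 / z) ^ n * exp (z / 2 * cosh t) := by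
    have h3 : cosh t ^ n = (n.factorial : ℝ) * (2 / z) ^ n * ((z / 2 * cosh t) ^ n / n.factorial) := by
      rw [mul_pow, div_pow, div_pow]; field_simp
    rw [h3]; gcongr
  calc cosh t ^ n * exp (-z * cosh t)
      ≤ (n.factorial : ℝ) * (2 / z) ^ n * exp (z / 2 * cosh t) * exp (-z * cosh t) := by gcongr
    _ = (n.factorial : ℝ) * (2 / z) ^ n * exp (-(z / 2) * cosh t) := by
        rw [mul_assoc, ← exp_add]; ring_nf
    _ ≤ _ := by
        gcongr ?_ * exp ?_
        have := le_cosh_self' t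
        nlinarith

lemma bj_deriv (n : ℕ) {z : ℝ} (hz : 0 < z) : HasDerivAt (bj n) (-bj (n + 1) z) z := by
  have h := hasDerivAt_integral_of_dominated_loc_of_deriv_le
    (μ := volume.restrict (Ioi (0 : ℝ)))
    (F := fun z t => cosh t ^ n * exp (-z * cosh t))
    (F' := fun z t => -(cosh t ^ (n + 1) * exp (-z * cosh t)))
    (bound := fun t => cosh t ^ (n + 1) * exp (-(z / 2) * cosh t))
    (x₀ := z) (s := Ioi (z / 2)) (Ioi_mem_nhds (by linarith))
    (Eventually.of_forall fun x => by fun_prop) (bj_int n hz) (by fun_prop)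
    (ae_of_all _ fun t x hx => by
      have hc := cosh_pos t
      rw [norm_neg, Real.norm_of_nonneg (by positivity)]
      gcongr
      exact (le_of_lt hx))
    (bj_int (n + 1) (half_pos hz))
    (ae_of_all _ fun t x hx => by
      have h1 : HasDerivAt (fun x => cosh t ^ n * exp (-x * cosh t))
          (cosh t ^ n * (exp (-x * cosh t) * (-1 * cosh t))) x :=
        ((((hasDerivAt_id x).neg).mul_const (cosh t)).exp).const_mul _
      refine h1.congr_deriv ?_
      ring)
  have h2 := h.2
  rw [integral_neg] at h2
  exact h2

lemma bj_tend (z : ℝ) (hz : 0 < z) : Tendsto (fun t => exp (-z * cosh t)) atTop (𝓝 0) := by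
  have : Tendsto (fun t => z * cosh t) atTop atTop := by
    apply Tendsto.const_mul_atTop hz
    exact tendsto_atTop_mono le_cosh_self' tendsto_id
  have := Real.tendsto_exp_neg_atTop_nhds_zero.comp this
  refine this.congr fun t => ?_
  simp

lemma bj_tend' (z : ℝ) (hz : 0 < z) : Tendsto (fun t => sinh t * exp (-z * cosh t)) atTop (𝓝 0) := by
  have h1 : Tendsto (fun t => z * cosh t) atTop atTop := by
    apply Tendsto.const_mul_atTop hz
    exact tendsto_atTop_mono le_cosh_self' tendsto_id
  have h2 := ((Real.tendsto_pow_mul_exp_neg_atTop_nhds_zero 1).comp h1).const_mul (1 / z)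
  rw [mul_zero] at h2
  refine squeeze_zero_norm (fun t => ?_) h2
  simp only [Function.comp]
  have h3 : |sinh t| ≤ cosh t := by
    rw [abs_le]
    have := Real.sinh_lt_cosh t
    have := Real.sinh_lt_cosh (-t)
    rw [sinh_neg, cosh_neg] at this
    constructor <;> linarith
  rw [norm_mul, Real.norm_eq_abs, Real.norm_of_nonneg (exp_pos _).le]
  calc _ ≤ cosh t * exp (-z * cosh t) := by gcongr
    _ = _ := by rw [pow_one]; field_simp

/-- recurrence -/
lemma bj_rec {z : ℝ} (hz : 0 < z) : z * (bj 2 z - bj 0 z) = bj 1 z := by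
  have h0 := bj_int 0 hz
  have h1 := bj_int 1 hz
  have h2 := bj_int 2 hz
  have h20 : IntegrableOn (fun t => z * (cosh t ^ 2 * exp (-z * cosh t) -
      cosh t ^ 0 * exp (-z * cosh t))) (Ioi (0 : ℝ)) := (h2.sub h0).const_mul z
  have hi : IntegrableOn (fun t => cosh t ^ 1 * exp (-z * cosh t) -
      z * (cosh t ^ 2 * exp (-z * cosh t) - cosh t ^ 0 * exp (-z * cosh t))) (Ioi (0 : ℝ)) :=
    h1.sub h20
  have h := integral_Ioi_of_hasDerivAt_of_tendsto' (a := (0:ℝ))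
    (f := fun t => sinh t * exp (-z * cosh t)) (m := 0)
    (fun t _ => by
      have h1 : HasDerivAt (fun t => sinh t * exp (-z * cosh t))
          (cosh t * exp (-z * cosh t) + sinh t * (exp (-z * cosh t) * (-z * sinh t))) t :=
        (hasDerivAt_sinh t).mul ((hasDerivAt_cosh t).const_mul (-z)).exp
      refine h1.congr_deriv ?_
      rw [cosh_sq]; ring) hi (bj_tend' z hz)
  rw [integral_sub h1 h20, integral_const_mul, integral_sub h2 h0] at h
  simp only [sinh_zero] at h
  unfold bj
  linarith

lemma K0_eq (z : ℝ) : besselK 0 z = bj 0 z := by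
  simp [besselK, bj]
lemma K1_eq (z : ℝ) : besselK 1 z = bj 1 z := by
  simp [besselK, bj, mul_comm]
lemma K2_eq {z : ℝ} (hz : 0 < z) : besselK 2 z = bj 0 z + 2 * bj 1 z / z := by
  have h0 := bj_int 0 hz
  have h2 := bj_int 2 hz
  have : besselK 2 z = 2 * bj 2 z - bj 0 z := by
    unfold besselK bj
    rw [← integral_const_mul, ← integral_sub (h2.const_mul 2) h0]
    congr 1; ext t
    push_cast
    rw [cosh_two_mul, cosh_sq]; ring
  rw [this, ← bj_rec hz]; field_simp; ring

lemma g_bound {z : ℝ} (hz : 0 < z) : exp (-z) ≤ z * bj 1 z ∧ z * bj 1 z ≤ exp (-z) + z := by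
  have h1 := bj_int 1 hz
  have hs : IntegrableOn (fun t => z * (sinh t * exp (-z * cosh t))) (Ioi (0:ℝ)) := by
    refine Integrable.mono' (h1.const_mul z) (by fun_prop) ?_
    filter_upwards [ae_restrict_mem measurableSet_Ioi] with t ht
    have := Real.sinh_nonneg_iff.2 (le_of_lt ht)
    rw [Real.norm_of_nonneg (by positivity), pow_one]
    gcongr
    exact (sinh_lt_cosh t).le
  have h := integral_Ioi_of_hasDerivAt_of_tendsto' (a := (0:ℝ))
    (f := fun t => -exp (-z * cosh t)) (m := 0)
    (fun t _ => by
      have h1 : HasDerivAt (fun t => -exp (-z * cosh t))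
          (-(exp (-z * cosh t) * (-z * sinh t))) t :=
        (((hasDerivAt_cosh t).const_mul (-z)).exp).neg
      refine h1.congr_deriv ?_
      ring) hs (by simpa using (bj_tend z hz).neg)
  have h' : ∫ t in Ioi (0:ℝ), z * (sinh t * exp (-z * cosh t)) = exp (-z) := by
    rw [h]; simp
  have he := (exp_neg_integrableOn_Ioi 0 one_pos).const_mul z
  have he' : ∫ t in Ioi (0:ℝ), z * exp (-1 * t) = z := by
    rw [integral_const_mul]
    simp only [neg_one_mul, integral_exp_neg_Ioi_zero, mul_one]
  have e1 : z * bj 1 z = ∫ t in Ioi (0:ℝ), z * (cosh t ^ 1 * exp (-z * cosh t)) := by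
    rw [integral_const_mul]; rfl
  constructor
  · rw [← h', e1]
    refine setIntegral_mono_on hs (h1.const_mul z) measurableSet_Ioi fun t ht => ?_
    rw [pow_one]
    gcongr
    exact (sinh_lt_cosh t).le
  · have e2 := integral_add hs he
    rw [h', he'] at e2
    rw [e1, ← e2]
    refine setIntegral_mono_on (h1.const_mul z) (hs.add he) measurableSet_Ioi fun t ht => ?_
    have h5 : cosh t = sinh t + exp (-1 * t) := by
      rw [neg_one_mul, ← cosh_sub_sinh]; ring
    have h6 : exp (-z * cosh t) ≤ 1 := by
      rw [exp_le_one_iff]; nlinarith [cosh_pos t]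
    have h7 : cosh t ^ 1 * exp (-z * cosh t) = sinh t * exp (-z * cosh t) + exp (-1 * t) * exp (-z * cosh t) := by
      rw [pow_one, ← add_mul, ← h5]
    rw [h7]
    nlinarith [mul_le_mul_of_nonneg_left h6 (mul_pos hz (exp_pos (-1*t))).le]

lemma K1_ge_K0 {z : ℝ} (hz : 0 < z) : bj 0 z ≤ bj 1 z := by
  refine setIntegral_mono_on (bj_int 0 hz) (bj_int 1 hz) measurableSet_Ioi fun t ht => ?_
  gcongr ?_ * _
  simp [one_le_cosh t]
lemma log_exp_int : IntegrableOn (fun s => log s * exp (-s)) (Ioi (0 : ℝ)) ∧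
    ∫ s in Ioi (0 : ℝ), log s * exp (-s) = -eulerMascheroniConstant := by
  have key := mellin_hasDerivAt_of_isBigO_rpow (E := ℂ) (a := 2) (b := 0) (s := 1)
    (f := fun t : ℝ => (Real.exp (-t) : ℂ)) ?_ ?_ (by simp) ?_ (by simp)
  · constructor
    · have h := key.1
      unfold MellinConvergent at h
      have h2 := h.re
      refine h2.congr ?_
      filter_upwards with t
      simp [← Complex.ofReal_exp]
    · have h := Complex.hasDerivAt_GammaIntegral (s := 1) (by simp)
      have h3 : HasDerivAt Complex.Gamma
          (∫ t : ℝ in Ioi 0, (t : ℂ) ^ ((1:ℂ) - 1) * (Real.log t * Real.exp (-t))) 1 := by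
        refine h.congr_of_eventuallyEq ?_
        have : IsOpen {s : ℂ | 0 < s.re} := Complex.continuous_re.isOpen_preimage _ isOpen_Ioi
        filter_upwards [this.mem_nhds (by simp)] with a ha using Complex.Gamma_eq_integral ha
      have h4 := h3.unique Complex.hasDerivAt_Gamma_one
      simp only [sub_self, Complex.cpow_zero, one_mul] at h4
      rw [← Complex.ofReal_inj, ← integral_complex_ofReal]
      push_cast
      push_cast at h4
      exact h4
  · refine (Continuous.continuousOn ?_).locallyIntegrableOn measurableSet_Ioi
    fun_prop
  · rw [← Asymptotics.isBigO_norm_left]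
    simp_rw [Complex.norm_real, Asymptotics.isBigO_norm_left]
    simpa only [neg_one_mul] using (isLittleO_exp_neg_mul_rpow_atTop zero_lt_one _).isBigO
  · simp_rw [neg_zero, rpow_zero]
    refine Asymptotics.isBigO_const_of_tendsto (y := (1:ℂ)) ?_ one_ne_zero
    rw [(by simp : (1 : ℂ) = Real.exp (-0))]
    exact (Complex.continuous_ofReal.comp (Real.continuous_exp.comp continuous_neg)).continuousWithinAt

noncomputable def Fe (x : ℝ) : ℝ := ∫ t in Ioi (0 : ℝ), exp (-x * exp t)

lemma Fe_int {x : ℝ} (hx : 0 < x) : IntegrableOn (fun t => exp (-x * exp t)) (Ioi (0 : ℝ)) := by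
  refine Integrable.mono' (exp_neg_integrableOn_Ioi 0 hx) (by fun_prop) (ae_of_all _ fun t => ?_)
  rw [Real.norm_of_nonneg (exp_pos _).le]
  have := add_one_le_exp t
  rw [exp_le_exp]
  nlinarith

lemma Fe_eq {x : ℝ} (hx : 0 < x) :
    Fe x = (∫ s in Ioi x, log s * exp (-s)) - log x * exp (-x) := by
  have him : (fun t => x * exp t) '' Ioi (0 : ℝ) = Ioi x := by
    ext s
    simp only [mem_image, mem_Ioi]
    constructor
    · rintro ⟨t, ht, rfl⟩
      have := Real.one_lt_exp_iff.2 ht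
      nlinarith
    · intro hs
      refine ⟨log (s / x), log_pos (by rwa [one_lt_div hx]), ?_⟩
      rw [exp_log (by have := hx.trans hs; positivity)]; field_simp
  have hd : ∀ t ∈ Ioi (0:ℝ), HasDerivWithinAt (fun t => x * exp t) (x * exp t) (Ioi 0) t :=
    fun t _ => ((Real.hasDerivAt_exp t).const_mul x).hasDerivWithinAt
  have hinj : InjOn (fun t => x * exp t) (Ioi (0 : ℝ)) := by
    intro a _ b _ h
    exact Real.exp_injective (mul_left_cancel₀ hx.ne' h)
  have hl : IntegrableOn (fun s => log s * exp (-s)) (Ioi x) :=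
    log_exp_int.1.mono_set (Ioi_subset_Ioi hx.le)
  have he : IntegrableOn (fun s => log x * exp (-s)) (Ioi x) := by
    have := (exp_neg_integrableOn_Ioi x one_pos).const_mul (log x)
    simp only [neg_one_mul] at this
    exact this
  have hg : IntegrableOn (fun s => log s * exp (-s) - log x * exp (-s)) (Ioi x) := hl.sub he
  have e1 := integral_image_eq_integral_abs_deriv_smul measurableSet_Ioi hd hinj
    (fun s => log s * exp (-s) - log x * exp (-s))
  have i1 := (integrableOn_image_iff_integrableOn_abs_deriv_smul measurableSet_Ioi hd hinj
    (fun s => log s * exp (-s) - log x * exp (-s))).1 (by rw [him]; exact hg)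
  have hfun : (fun t => |x * exp t| • (log (x * exp t) * exp (-(x * exp t)) -
      log x * exp (-(x * exp t)))) = fun t => t * (x * exp t * exp (-x * exp t)) := by
    ext t
    rw [abs_of_pos (by positivity), log_mul hx.ne' (exp_pos t).ne', log_exp, smul_eq_mul]
    ring_nf
  simp only [hfun] at i1 e1
  rw [him, integral_sub hl he, integral_const_mul, integral_exp_neg_Ioi] at e1
  have i2 : IntegrableOn (fun t => exp (-x * exp t) - t * (x * exp t * exp (-x * exp t)))
    (Ioi (0:ℝ)) := (Fe_int hx).sub i1
  have h := integral_Ioi_of_hasDerivAt_of_tendsto' (a := (0:ℝ))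
    (f := fun t => t * exp (-x * exp t)) (m := 0)
    (fun t _ => by
      have h1 : HasDerivAt (fun t => t * exp (-x * exp t))
          (1 * exp (-x * exp t) + t * (exp (-x * exp t) * (-x * exp t))) t :=
        (hasDerivAt_id t).mul ((Real.hasDerivAt_exp t).const_mul (-x)).exp
      refine h1.congr_deriv ?_
      ring) i2 (by
      have h1 : Tendsto (fun t => x * t) atTop atTop := tendsto_id.const_mul_atTop hx
      have h2 := ((Real.tendsto_pow_mul_exp_neg_atTop_nhds_zero 1).comp h1).const_mul (1 / x)
      rw [mul_zero] at h2
      refine squeeze_zero_norm' ?_ h2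
      filter_upwards [eventually_ge_atTop 0] with t ht
      rw [Real.norm_of_nonneg (by positivity)]
      simp only [Function.comp]
      have : 1 / x * ((x * t) ^ 1 * exp (-(x * t))) = t * exp (-(x * t)) := by field_simp
      rw [this]
      have := add_one_le_exp t
      gcongr
      nlinarith)
  rw [integral_sub (Fe_int hx) i1] at h
  simp only [zero_mul, sub_zero] at h
  unfold Fe
  linarith

lemma Fe_lim : Tendsto (fun x => Fe x + log x) (𝓝[>] 0) (𝓝 (-eulerMascheroniConstant)) := by
  have hcov : AECover (volume.restrict (Ioi (0:ℝ))) (𝓝[>] 0) fun x : ℝ => Ioi x :=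
    aecover_Ioi_of_Ioi (tendsto_nhdsWithin_of_tendsto_nhds tendsto_id)
  have h1 := hcov.integral_tendsto_of_countably_generated log_exp_int.1
  rw [log_exp_int.2] at h1
  have h2 : Tendsto (fun x => log x * (1 - exp (-x))) (𝓝[>] 0) (𝓝 0) := by
    have h3 := (tendsto_log_mul_rpow_nhdsGT_zero (r := 1) one_pos)
    refine squeeze_zero_norm' ?_ (by simpa using h3.norm)
    filter_upwards [self_mem_nhdsWithin] with x hx
    have hx : 0 < x := hx
    have h5 : exp (-x) ≤ 1 := by simpa using hx.le
    rw [norm_mul]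
    simp only [Real.norm_eq_abs]
    refine mul_le_mul_of_nonneg_left ?_ (abs_nonneg _)
    rw [abs_of_nonneg (by linarith)]
    linarith [add_one_le_exp (-x), le_abs_self x]
  have h4 := h1.add h2
  rw [add_zero] at h4
  refine h4.congr' ?_
  filter_upwards [self_mem_nhdsWithin] with x hx
  have hx : 0 < x := hx
  rw [Fe_eq hx, Measure.restrict_restrict measurableSet_Ioi,
    inter_eq_left.2 (Ioi_subset_Ioi hx.le)]
  ring

noncomputable def LL (z : ℝ) : ℝ := -log (z / 2) - eulerMascheroniConstant

lemma K0_Fe {z : ℝ} (hz : 0 < z) : |bj 0 z - Fe (z / 2)| ≤ z / 2 := by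
  have h1 := bj_int 0 hz
  have h2 := Fe_int (half_pos hz)
  have he := (exp_neg_integrableOn_Ioi 0 one_pos).const_mul (z / 2)
  have he' : ∫ t in Ioi (0:ℝ), z / 2 * exp (-1 * t) = z / 2 := by
    rw [integral_const_mul]
    simp only [neg_one_mul, integral_exp_neg_Ioi_zero, mul_one]
  unfold bj Fe
  rw [← integral_sub h1 h2, ← Real.norm_eq_abs]
  refine (norm_integral_le_of_norm_le he (ae_of_all _ fun t => ?_)).trans he'.le
  have e1 : cosh t ^ 0 * exp (-z * cosh t) =
      exp (-(z / 2) * exp t) * exp (-(z / 2 * exp (-1 * t))) := by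
    rw [pow_zero, one_mul, ← exp_add, cosh_eq, neg_one_mul]; ring_nf
  rw [e1]
  have h3 : exp (-(z / 2) * exp t) ≤ 1 := by
    rw [exp_le_one_iff]; nlinarith [exp_pos t]
  have h4 : exp (-(z / 2 * exp (-1 * t))) ≤ 1 := by
    rw [exp_le_one_iff]; nlinarith [exp_pos (-1 * t)]
  have h5 := add_one_le_exp (-(z / 2 * exp (-1 * t)))
  have h6 := exp_pos (-(z / 2) * exp t)
  rw [Real.norm_eq_abs, abs_le]
  constructor <;> nlinarith

lemma K0_lim : Tendsto (fun z => bj 0 z - LL z) (𝓝[>] 0) (𝓝 0) := by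
  have h0 : Tendsto (fun z : ℝ => z / 2) (𝓝[>] 0) (𝓝 0) := by
    have : Tendsto (fun z : ℝ => z / 2) (𝓝 0) (𝓝 (0 / 2)) := tendsto_id.div_const 2
    rw [zero_div] at this
    exact tendsto_nhdsWithin_of_tendsto_nhds this
  have h0' : Tendsto (fun z : ℝ => z / 2) (𝓝[>] 0) (𝓝[>] 0) := by
    refine tendsto_nhdsWithin_iff.2 ⟨h0, ?_⟩
    filter_upwards [self_mem_nhdsWithin] with z hz
    exact half_pos (show (0:ℝ) < z from hz)
  have h1 : Tendsto (fun z => bj 0 z - Fe (z / 2)) (𝓝[>] 0) (𝓝 0) := by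
    refine squeeze_zero_norm' ?_ h0
    filter_upwards [self_mem_nhdsWithin] with z hz using K0_Fe hz
  have h2 := (Fe_lim.comp h0').add_const eulerMascheroniConstant
  have h3 := h1.add h2
  simp only [neg_add_cancel, add_zero] at h3
  refine h3.congr fun z => ?_
  simp only [Function.comp, LL]
  ring

lemma mono_zero {f f' : ℝ → ℝ} {b : ℝ} (hb : 0 < b) (hd : ∀ x ∈ Ioc 0 b, HasDerivAt f (f' x) x)
    (hp : ∀ x ∈ Ioc 0 b, 0 ≤ f' x) (hl : Tendsto f (𝓝[>] 0) (𝓝 0)) : 0 ≤ f b := by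
  have hm : MonotoneOn f (Ioc 0 b) := by
    refine monotoneOn_of_deriv_nonneg (convex_Ioc 0 b)
      (fun x hx => (hd x hx).continuousAt.continuousWithinAt) ?_ ?_
    · intro x hx
      exact (hd x (interior_subset hx)).differentiableAt.differentiableWithinAt
    · intro x hx
      rw [(hd x (interior_subset hx)).deriv]
      exact hp x (interior_subset hx)
  refine le_of_tendsto hl ?_
  filter_upwards [Ioc_mem_nhdsGT hb] with x hx
  exact hm hx ⟨hb, le_rfl⟩ hx.2

lemma g_deriv {z : ℝ} (hz : 0 < z) : HasDerivAt (fun z => 1 - z * bj 1 z) (z * bj 0 z) z := by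
  have h : HasDerivAt (fun z => 1 - z * bj 1 z) (-(1 * bj 1 z + z * -bj 2 z)) z :=
    ((hasDerivAt_id z).mul (bj_deriv 1 hz)).const_sub 1
  refine h.congr_deriv ?_
  rw [← bj_rec hz]; ring

lemma LL_deriv {z : ℝ} (hz : 0 < z) : HasDerivAt LL (-(1 / z)) z := by
  have h : HasDerivAt LL (-((1 / 2) / (z / 2))) z :=
    ((((hasDerivAt_id z).div_const 2).log (by simp [hz.ne'])).neg).sub_const _
  refine h.congr_deriv ?_
  field_simp

lemma a_deriv {z : ℝ} (hz : 0 < z) :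
    HasDerivAt (fun z => bj 0 z - LL z) ((1 - z * bj 1 z) / z) z := by
  refine ((bj_deriv 0 hz).sub (LL_deriv hz)).congr_deriv ?_
  field_simp; ring

lemma g_lim : Tendsto (fun z => 1 - z * bj 1 z) (𝓝[>] 0) (𝓝 0) := by
  refine squeeze_zero_norm' (a := fun z => z) ?_ (tendsto_nhdsWithin_of_tendsto_nhds tendsto_id)
  filter_upwards [self_mem_nhdsWithin] with z hz
  have hz : 0 < z := hz
  obtain ⟨h1, h2⟩ := g_bound hz
  have h5 : exp (-z) ≤ 1 := by simpa using hz.le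
  rw [Real.norm_eq_abs, abs_le]
  constructor <;> linarith [add_one_le_exp (-z)]

lemma bj_nonneg (n : ℕ) (z : ℝ) : 0 ≤ bj n z :=
  integral_nonneg fun t => by have := cosh_pos t; positivity

lemma g_le {z : ℝ} (hz : 0 < z) : 0 ≤ 1 - z * bj 1 z :=
  mono_zero (f := fun z => 1 - z * bj 1 z) hz (fun x hx => g_deriv hx.1)
    (fun x hx => mul_nonneg hx.1.le (bj_nonneg 0 x)) g_lim

lemma a_nonneg {z : ℝ} (hz : 0 < z) : 0 ≤ bj 0 z - LL z :=
  mono_zero (f := fun z => bj 0 z - LL z) hz (fun x hx => a_deriv hx.1)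
    (fun x hx => div_nonneg (g_le hx.1) hx.1.le) K0_lim

lemma a_crude {z : ℝ} (hz : 0 < z) : 0 ≤ z - (bj 0 z - LL z) := by
  refine mono_zero (f := fun z => z - (bj 0 z - LL z)) hz
    (fun x hx => (hasDerivAt_id x).sub (a_deriv hx.1)) (fun x hx => ?_) ?_
  · have hx0 : 0 < x := hx.1
    rw [sub_nonneg, div_le_one hx0]
    linarith [(g_bound hx0).1, add_one_le_exp (-x)]
  · have := (tendsto_nhdsWithin_of_tendsto_nhds (s := Ioi (0:ℝ)) tendsto_id).sub K0_lim
    simpa using this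

lemma LL_low {z : ℝ} (hz : 0 < z) (hz1 : z ≤ 73 / 100) : 1 / 3 ≤ LL z := by
  have h1 : 1 ≤ -log (z / 2) := by
    rw [← log_inv, le_log_iff_exp_le (by positivity)]
    have h2 := exp_one_lt_d9
    have h3 : (200 / 73 : ℝ) ≤ (z / 2)⁻¹ := by
      rw [le_inv_comm₀ (by norm_num) (by positivity)]; norm_num; linarith
    linarith
  have := eulerMascheroniConstant_lt_two_thirds
  unfold LL; linarith

lemma LL_up {z : ℝ} (hz : 0 < z) : z * LL z ≤ 2 := by
  have h1 := log_le_sub_one_of_pos (show 0 < (z / 2)⁻¹ by positivity)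
  rw [log_inv] at h1
  have := one_half_lt_eulerMascheroniConstant
  have h2 : LL z ≤ (z / 2)⁻¹ := by unfold LL; linarith
  calc z * LL z ≤ z * (z / 2)⁻¹ := by gcongr
    _ = 2 := by field_simp

lemma h_deriv {z : ℝ} (hz : 0 < z) :
    HasDerivAt (fun z => z ^ 2 * (1 + LL z)) (z * (1 + 2 * LL z)) z := by
  refine ((hasDerivAt_pow 2 z).mul ((LL_deriv hz).const_add 1)).congr_deriv ?_
  simp; field_simp; ring

lemma h_lim : Tendsto (fun z => z ^ 2 * (1 + LL z)) (𝓝[>] 0) (𝓝 0) := by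
  have h0 : Tendsto (fun z : ℝ => z * 3) (𝓝[>] 0) (𝓝 0) := by
    have : Tendsto (fun z : ℝ => z * 3) (𝓝 0) (𝓝 (0 * 3)) := tendsto_id.mul_const 3
    rw [zero_mul] at this
    exact tendsto_nhdsWithin_of_tendsto_nhds this
  refine squeeze_zero_norm' ?_ h0
  filter_upwards [Ioc_mem_nhdsGT (show (0:ℝ) < 73 / 100 by norm_num)] with z hz
  have h1 := LL_up hz.1
  have h2 := LL_low hz.1 hz.2
  have h3 := hz.1
  have h4 := hz.2
  rw [Real.norm_of_nonneg (by positivity)]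
  nlinarith

lemma g_fine {z : ℝ} (hz : 0 < z) (hz1 : z ≤ 73 / 100) : 1 - z * bj 1 z ≤ z ^ 2 * (1 + LL z) := by
  refine sub_nonneg.1 (mono_zero (f := fun z => z ^ 2 * (1 + LL z) - (1 - z * bj 1 z)) hz
    (fun x hx => (h_deriv hx.1).sub (g_deriv hx.1)) (fun x hx => ?_)
    (by simpa using h_lim.sub g_lim))
  have h1 := a_crude hx.1
  have h2 := LL_low hx.1 (hx.2.trans hz1)
  have h3 := hx.1
  have h4 := hx.2
  rw [← mul_sub]
  apply mul_nonneg h3.le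
  linarith

lemma a_fine {z : ℝ} (hz : 0 < z) (hz1 : z ≤ 73 / 100) : bj 0 z - LL z ≤ z ^ 2 * (1 + LL z) := by
  refine sub_nonneg.1 (mono_zero (f := fun z => z ^ 2 * (1 + LL z) - (bj 0 z - LL z)) hz
    (fun x hx => (h_deriv hx.1).sub (a_deriv hx.1)) (fun x hx => ?_)
    (by simpa using h_lim.sub K0_lim))
  have h1 := g_fine hx.1 (hx.2.trans hz1)
  have h2 := LL_low hx.1 (hx.2.trans hz1)
  have h3 := hx.1
  rw [sub_nonneg, div_le_iff₀ h3]
  nlinarith [mul_nonneg (sq_nonneg x) (show 0 ≤ LL x by linarith)]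

set_option maxHeartbeats 2000000 in
lemma alg_core {z L p g m : ℝ} (hz : 0 < z) (hz1 : z ≤ 73 / 100) (hL : 1 / 3 ≤ L)
    (hp : L ≤ p) (hp' : p - L ≤ z ^ 2 * (1 + L)) (hg : 27 / 100 ≤ g) (hg1 : g ≤ 1)
    (hg' : 1 - g ≤ z ^ 2 * (1 + L)) (hzp : z * p ≤ g) (hm : m = z ^ 2 * p + 2 * g) :
    0 < 2 * p * g * m + g ^ 2 * (z ^ 2 * p + m) - 2 * z ^ 2 * p ^ 2 * m ∧
    |(4 * g ^ 2 * m + z ^ 2 * g * (g ^ 2 - p * m)) /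
      (2 * p * g * m + g ^ 2 * (z ^ 2 * p + m) - 2 * z ^ 2 * p ^ 2 * m) - 4 / (1 + 2 * L)| ≤
      5000 * z ^ 2 := by
  have hp0 : 0 < p := by linarith
  have hg0 : 0 < g := by linarith
  have hm0 : 2 * g ≤ m := by rw [hm]; nlinarith [mul_pos (pow_pos hz 2) hp0]
  have hmp : 0 < m := by linarith
  have hm3 : m ≤ 3 := by
    rw [hm]; nlinarith [mul_le_mul_of_nonneg_left hzp hz.le]
  set S := 1 + L with hS
  have hS1 : 1 ≤ S := by linarith
  have hSS : S ≤ S ^ 2 := by nlinarith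
  have hz2 : z ^ 2 ≤ 1 := by nlinarith
  have hp2 : p ≤ 2 * S := by nlinarith
  have hD : 9 / 250 * S ≤ 2 * p * g * m + g ^ 2 * (z ^ 2 * p + m) - 2 * z ^ 2 * p ^ 2 * m := by
    have e1 : (z * p) ^ 2 ≤ g ^ 2 := by gcongr
    have e2 : z * (z * p) ≤ 1 * g := by gcongr; linarith
    have e3 : 0 ≤ (g ^ 2 - (z * p) ^ 2) * m := mul_nonneg (by linarith) hmp.le
    have e4 : 0 ≤ (p * m) * (g - z * (z * p)) := mul_nonneg (by positivity) (by linarith)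
    have e5 : 0 ≤ g ^ 2 * (z ^ 2 * p) := by positivity
    have e6 : (S / 4) * (27 / 100) * (2 * (27 / 100)) ≤ p * g * m := by
      gcongr <;> linarith
    nlinarith
  have hD0 : 0 < 2 * p * g * m + g ^ 2 * (z ^ 2 * p + m) - 2 * z ^ 2 * p ^ 2 * m := by
    linarith
  refine ⟨hD0, ?_⟩
  set D := 2 * p * g * m + g ^ 2 * (z ^ 2 * p + m) - 2 * z ^ 2 * p ^ 2 * m with hDdef
  have hL0 : 0 < 1 + 2 * L := by linarith
  have hLS : S ≤ 1 + 2 * L := by linarith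
  have hLS2 : 1 + 2 * L ≤ 2 * S := by linarith
  rw [div_sub_div _ _ hD0.ne' hL0.ne', abs_div, abs_of_pos (mul_pos hD0 hL0),
    div_le_iff₀ (mul_pos hD0 hL0)]
  have hE : (4 * g ^ 2 * m + z ^ 2 * g * (g ^ 2 - p * m)) * (1 + 2 * L) - D * 4 =
      8 * (g * m) * (g * L - p) + z ^ 2 * (g ^ 3 * (1 + 2 * L) - g * p * m * (1 + 2 * L)
        - 4 * (g ^ 2 * p) + 8 * (p ^ 2 * m)) := by
    rw [hDdef]; ring
  rw [hE]
  have b1 : |g * L - p| ≤ z ^ 2 * S ^ 2 := by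
    rw [abs_le]
    have : (1 - g) * L ≤ z ^ 2 * S * L := by gcongr
    constructor
    · nlinarith
    · have : 0 ≤ z ^ 2 * S ^ 2 := by positivity
      nlinarith
  have b2 : g * m ≤ 1 * 3 := by gcongr
  have c1 : g ^ 3 * (1 + 2 * L) ≤ 1 ^ 3 * (2 * S) := by gcongr
  have c2 : g * p * m * (1 + 2 * L) ≤ 1 * (2 * S) * 3 * (2 * S) := by gcongr
  have c3 : g ^ 2 * p ≤ 1 ^ 2 * (2 * S) := by gcongr
  have c4 : p ^ 2 * m ≤ (2 * S) ^ 2 * 3 := by gcongr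
  have d1 : 0 < g ^ 3 * (1 + 2 * L) := by positivity
  have d2 : 0 < g * p * m * (1 + 2 * L) := by positivity
  have d3 : 0 < g ^ 2 * p := by positivity
  have d4 : 0 < p ^ 2 * m := by positivity
  have b3 : |g ^ 3 * (1 + 2 * L) - g * p * m * (1 + 2 * L)
        - 4 * (g ^ 2 * p) + 8 * (p ^ 2 * m)| ≤ 142 * S ^ 2 := by
    rw [abs_le]; constructor <;> nlinarith
  have b4 : |8 * (g * m) * (g * L - p)| ≤ 24 * (z ^ 2 * S ^ 2) := by
    rw [abs_mul, abs_of_pos (by positivity)]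
    gcongr; linarith
  have b5 : |z ^ 2 * (g ^ 3 * (1 + 2 * L) - g * p * m * (1 + 2 * L)
        - 4 * (g ^ 2 * p) + 8 * (p ^ 2 * m))| ≤ z ^ 2 * (142 * S ^ 2) := by
    rw [abs_mul, abs_of_pos (by positivity)]
    gcongr
  have b6 : (9 / 250 * S) * S ≤ D * (1 + 2 * L) := by gcongr
  refine (abs_add_le _ _).trans ?_
  calc _ ≤ 24 * (z ^ 2 * S ^ 2) + z ^ 2 * (142 * S ^ 2) := add_le_add b4 b5
    _ ≤ 5000 * z ^ 2 * ((9 / 250 * S) * S) := by nlinarith [mul_pos (pow_pos hz 2) (pow_pos (show 0 < S by linarith) 2)]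
    _ ≤ _ := by gcongr

lemma core {z : ℝ} (hz : 0 < z) (hz1 : z ≤ 73 / 100) :
    |z * ((4 * besselK 1 z ^ 2 * besselK 2 z +
          z * besselK 1 z * (besselK 1 z ^ 2 - besselK 0 z * besselK 2 z)) /
        (2 * besselK 0 z * besselK 1 z * besselK 2 z +
          z * (besselK 1 z ^ 2 * (besselK 0 z + besselK 2 z) -
            2 * besselK 0 z ^ 2 * besselK 2 z))) -
      4 / (1 + 2 * LL z)| ≤ 5000 * z ^ 2 := by
  have hgb := (g_bound hz).1
  have hge := add_one_le_exp (-z)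
  obtain ⟨h1, h2⟩ := alg_core (z := z) (L := LL z) (p := bj 0 z) (g := z * bj 1 z)
    (m := z ^ 2 * bj 0 z + 2 * (z * bj 1 z)) hz hz1 (LL_low hz hz1)
    (by linarith [a_nonneg hz]) (a_fine hz hz1) (by linarith) (by linarith [g_le hz])
    (g_fine hz hz1) (by gcongr; exact K1_ge_K0 hz) rfl
  rw [K0_eq, K1_eq, K2_eq hz]
  convert h2 using 3
  set p := bj 0 z
  set k := bj 1 z
  have hz3 : z ^ 3 ≠ 0 := by positivity
  rw [← mul_div_assoc, ← mul_div_mul_left _ _ hz3]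
  congr 1
  · field_simp
  · field_simp
    ring

theorem stokes_normal_eigenvalue_difference :
    ∃ C : ℝ, 0 < C ∧ ∀ ε : ℝ, 0 < ε → ∀ k : ℕ, 1 ≤ k → π * ε * (k : ℝ) ≤ 73 / 100 →
      |2 * π ^ 2 * ε * (k : ℝ) *
            ((4 * (besselK 1 (π * ε * (k : ℝ))) ^ 2 * besselK 2 (π * ε * (k : ℝ)) +
                π * ε * (k : ℝ) * besselK 1 (π * ε * (k : ℝ)) *
                  ((besselK 1 (π * ε * (k : ℝ))) ^ 2 -
                    besselK 0 (π * ε * (k : ℝ)) * besselK 2 (π * ε * (k : ℝ)))) /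
              (2 * besselK 0 (π * ε * (k : ℝ)) * besselK 1 (π * ε * (k : ℝ)) *
                  besselK 2 (π * ε * (k : ℝ)) +
                π * ε * (k : ℝ) *
                  ((besselK 1 (π * ε * (k : ℝ))) ^ 2 *
                      (besselK 0 (π * ε * (k : ℝ)) + besselK 2 (π * ε * (k : ℝ))) -
                    2 * (besselK 0 (π * ε * (k : ℝ))) ^ 2 *
                      besselK 2 (π * ε * (k : ℝ))))) -
          8 * π /
            (1 - 2 * Real.log (π * ε * (k : ℝ) / 2) - 2 * Real.eulerMascheroniConstant)| ≤
        C * ε ^ 2 * (k : ℝ) ^ 2 := by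
  refine ⟨10000 * π ^ 3, by positivity, ?_⟩
  intro ε hε k hk hz1
  have hk' : (0 : ℝ) < k := by exact_mod_cast hk
  have hz : 0 < π * ε * (k : ℝ) := by positivity
  have h := core hz hz1
  set z := π * ε * (k : ℝ) with hzdef
  have e1 : 2 * π ^ 2 * ε * (k : ℝ) = 2 * π * z := by rw [hzdef]; ring
  have e2 : 8 * π / (1 - 2 * Real.log (z / 2) - 2 * Real.eulerMascheroniConstant) =
      2 * π * (4 / (1 + 2 * LL z)) := by
    unfold LL; rw [← mul_div_assoc]; ring_nf
  rw [e1, e2, mul_assoc (2 * π) z, ← mul_sub, abs_mul, abs_of_pos (by positivity : 0 < 2 * π)]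
  calc _ ≤ 2 * π * (5000 * z ^ 2) := by gcongr
    _ = _ := by rw [hzdef]; ring
end

section
/- There exists a constant C > 0 such that for every real δ > √e, every real ε > 0, and every positive integer k with πεk ≤ 1/4, writing K_j = K_j(πεk), the tangential Stokes slender-body PDE eigenvalue λᵗ = 4π²εk·K₁² / (2K₀K₁ + πεk·(K₀² − K₁²)) and the δ-regularized tangential eigenvalue λ^{δ,t} = 4π/(−1 + 2·log δ + 2·K₀(δπεk)) satisfy the refined bound |λᵗ − λ^{δ,t}| ≤ C·δ²·(1 + log δ)·ε²·k². -/
open Real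

open Real Set MeasureTheory Filter Topology

lemma bk_int_sinh {z : ℝ} (hz : 0 < z) :
    IntegrableOn (fun t => z * (cosh t * exp (-z * sinh t))) (Ioi 0) ∧
    ∫ t in Ioi (0:ℝ), z * (cosh t * exp (-z * sinh t)) = 1 := by
  have hd : ∀ t ∈ Ici (0:ℝ), HasDerivAt (fun t => -exp (-z * sinh t))
      (z * (cosh t * exp (-z * sinh t))) t := by
    intro t _
    have := (((hasDerivAt_sinh t).const_mul (-z)).exp).neg
    exact this.congr_deriv (by ring)
  have hs : Tendsto sinh atTop atTop := by
    refine tendsto_atTop_mono' atTop ?_ tendsto_id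
    filter_upwards [eventually_ge_atTop 0] with t ht
    exact Real.self_le_sinh_iff.2 ht
  have hl : Tendsto (fun t => -exp (-z * sinh t)) atTop (𝓝 (-0)) := by
    refine (Real.tendsto_exp_atBot.comp ?_).neg
    exact hs.const_mul_atTop_of_neg (by linarith)
  have hp : ∀ t ∈ Ioi (0:ℝ), 0 ≤ z * (cosh t * exp (-z * sinh t)) := by
    intro t _
    have := cosh_pos t
    positivity
  refine ⟨integrableOn_Ioi_deriv_of_nonneg' hd hp hl, ?_⟩
  rw [integral_Ioi_of_hasDerivAt_of_nonneg' hd hp hl]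
  simp

lemma bk_int_cosh {z : ℝ} (hz : 0 < z) :
    IntegrableOn (fun t => z * (sinh t * exp (-z * cosh t))) (Ioi 0) ∧
    ∫ t in Ioi (0:ℝ), z * (sinh t * exp (-z * cosh t)) = exp (-z) := by
  have hd : ∀ t ∈ Ici (0:ℝ), HasDerivAt (fun t => -exp (-z * cosh t))
      (z * (sinh t * exp (-z * cosh t))) t := by
    intro t _
    have := (((hasDerivAt_cosh t).const_mul (-z)).exp).neg
    exact this.congr_deriv (by ring)
  have hs : Tendsto cosh atTop atTop := by
    refine tendsto_atTop_mono' atTop ?_ tendsto_id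
    filter_upwards [eventually_ge_atTop 0] with t ht
    exact (Real.self_le_sinh_iff.2 ht).trans (sinh_lt_cosh t).le
  have hl : Tendsto (fun t => -exp (-z * cosh t)) atTop (𝓝 (-0)) := by
    refine (Real.tendsto_exp_atBot.comp ?_).neg
    exact hs.const_mul_atTop_of_neg (by linarith)
  have hp : ∀ t ∈ Ioi (0:ℝ), 0 ≤ z * (sinh t * exp (-z * cosh t)) := by
    intro t ht
    have := sinh_pos_iff.2 (mem_Ioi.1 ht)
    positivity
  refine ⟨integrableOn_Ioi_deriv_of_nonneg' hd hp hl, ?_⟩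
  rw [integral_Ioi_of_hasDerivAt_of_nonneg' hd hp hl]
  simp

lemma bk_i1 {z : ℝ} (hz : 0 < z) :
    IntegrableOn (fun t => cosh t * exp (-z * cosh t)) (Ioi 0) := by
  have h := (bk_int_sinh hz).1.const_mul z⁻¹
  refine Integrable.mono' h (by fun_prop) ?_
  refine Eventually.of_forall fun t => ?_
  have := cosh_pos t
  rw [Real.norm_of_nonneg (by positivity)]
  rw [inv_mul_cancel_left₀ hz.ne']
  have := sinh_lt_cosh t
  gcongr cosh t * exp ?_
  nlinarith

lemma bk_i0 {z : ℝ} (hz : 0 < z) :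
    IntegrableOn (fun t => exp (-z * cosh t)) (Ioi 0) := by
  refine Integrable.mono' (bk_i1 hz) (by fun_prop) ?_
  refine Eventually.of_forall fun t => ?_
  rw [Real.norm_of_nonneg (by positivity)]
  exact le_mul_of_one_le_left (exp_pos _).le (one_le_cosh t)

lemma bk_eq0 (z : ℝ) : besselK 0 z = ∫ t in Ioi (0:ℝ), exp (-z * cosh t) := by
  simp [besselK]

lemma bk_eq1 (z : ℝ) : besselK 1 z = ∫ t in Ioi (0:ℝ), cosh t * exp (-z * cosh t) := by
  simp [besselK, mul_comm]

lemma bk_eq1z (z : ℝ) :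
    z * besselK 1 z = ∫ t in Ioi (0:ℝ), z * (cosh t * exp (-z * cosh t)) := by
  rw [bk_eq1, integral_const_mul]

lemma bk_nonneg (z : ℝ) : 0 ≤ besselK 0 z := by
  rw [bk_eq0]; exact integral_nonneg fun t => (exp_pos _).le

lemma bk_x_le {z : ℝ} (hz : 0 < z) : z * besselK 1 z ≤ 1 := by
  rw [bk_eq1z, ← (bk_int_sinh hz).2]
  refine setIntegral_mono ((bk_i1 hz).const_mul z) (bk_int_sinh hz).1 fun t => ?_
  have := cosh_pos t
  have := sinh_lt_cosh t
  dsimp only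
  gcongr z * (cosh t * exp ?_)
  nlinarith

lemma bk_x_ge {z : ℝ} (hz : 0 < z) : 1 - z ≤ z * besselK 1 z := by
  refine (one_sub_le_exp_neg z).trans ?_
  rw [bk_eq1z, ← (bk_int_cosh hz).2]
  refine setIntegral_mono (bk_int_cosh hz).1 ((bk_i1 hz).const_mul z) fun t => ?_
  have := sinh_lt_cosh t
  dsimp only
  gcongr

lemma bk_anti {a b : ℝ} (ha : 0 < a) (hab : a ≤ b) : besselK 0 b ≤ besselK 0 a := by
  rw [bk_eq0, bk_eq0]
  refine setIntegral_mono (bk_i0 (ha.trans_le hab)) (bk_i0 ha) fun t => ?_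
  have := cosh_pos t
  dsimp only
  gcongr

lemma bk_one_sub {z : ℝ} (hz : 0 < z) (h1 : z ≤ 1) :
    1 - z * besselK 1 z ≤ 3 * z ^ 2 * besselK 0 z := by
  rw [bk_eq1z, bk_eq0, ← (bk_int_sinh hz).2, ← integral_const_mul,
    ← integral_sub (bk_int_sinh hz).1 ((bk_i1 hz).const_mul z)]
  refine setIntegral_mono_on ((bk_int_sinh hz).1.sub ((bk_i1 hz).const_mul z))
    ((bk_i0 hz).const_mul _) measurableSet_Ioi fun t ht => ?_
  have ht : 0 < t := ht
  have hE : 0 < exp (-z * cosh t) := exp_pos _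
  have e1 : exp (-z * sinh t) = exp (-z * cosh t) * exp (z * exp (-t)) := by
    rw [← exp_add]; congr 1; rw [← cosh_sub_sinh]; ring
  have q1 : exp (-t) ≤ 1 := exp_le_one_iff.2 (by linarith)
  have q0 := exp_pos (-t)
  have hy : z * exp (-t) ≤ 1 := by nlinarith
  have h3 : exp (z * exp (-t)) ≤ 3 :=
    (exp_le_exp.2 hy).trans (by linarith [exp_one_lt_d9])
  have h4 : exp (z * exp (-t)) - 1 ≤ (z * exp (-t)) * exp (z * exp (-t)) := by
    have := one_sub_le_exp_neg (z * exp (-t))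
    rw [exp_neg (z * exp (-t))] at this
    have hp := exp_pos (z * exp (-t))
    have h := mul_le_mul_of_nonneg_right this hp.le
    rw [inv_mul_cancel₀ hp.ne'] at h
    linarith
  have h5 : exp (z * exp (-t)) - 1 ≤ 3 * (z * exp (-t)) := by
    have : 0 < z * exp (-t) := by positivity
    nlinarith
  have h6 : cosh t * exp (-t) ≤ 1 := by
    rw [cosh_eq]
    have : exp t * exp (-t) = 1 := by rw [← exp_add]; simp
    nlinarith
  have h7 : cosh t * (exp (z * exp (-t)) - 1) ≤ 3 * z := by
    have := cosh_pos t
    calc _ ≤ cosh t * (3 * (z * exp (-t))) := by gcongr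
      _ = 3 * z * (cosh t * exp (-t)) := by ring
      _ ≤ 3 * z * 1 := by gcongr
      _ = _ := by ring
  rw [e1]
  calc _ = z * exp (-z * cosh t) * (cosh t * (exp (z * exp (-t)) - 1)) := by ring
    _ ≤ z * exp (-z * cosh t) * (3 * z) := by gcongr
    _ = _ := by ring

lemma bk_deriv {z : ℝ} (hz : 0 < z) : HasDerivAt (besselK 0) (-besselK 1 z) z := by
  have hf : besselK 0 = fun z => ∫ t in Ioi (0:ℝ), exp (-z * cosh t) := by
    ext z; exact bk_eq0 z
  rw [hf, bk_eq1, ← integral_neg]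
  refine (hasDerivAt_integral_of_dominated_loc_of_deriv_le
    (F := fun z t => exp (-z * cosh t)) (F' := fun z t => -(cosh t * exp (-z * cosh t)))
    (bound := fun t => cosh t * exp (-(z/2) * cosh t))
    (s := Ioi (z/2)) (Ioi_mem_nhds (by linarith)) ?_ (bk_i0 hz) (by fun_prop) ?_
    (bk_i1 (by linarith)) ?_).2
  · exact Eventually.of_forall fun x => by fun_prop
  · refine Eventually.of_forall fun t s hs => ?_
    have hs : z / 2 < s := hs
    have := cosh_pos t
    rw [norm_neg, Real.norm_of_nonneg (by positivity)]
    gcongr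
  · refine Eventually.of_forall fun t s hs => ?_
    have := (((hasDerivAt_id s).neg.mul_const (cosh t))).exp
    exact this.congr_deriv (by simp; try ring)

lemma bk_g_deriv {s : ℝ} (hs : 0 < s) :
    HasDerivAt (fun s => besselK 0 s + log s) ((1 - s * besselK 1 s) / s) s := by
  exact ((bk_deriv hs).add (hasDerivAt_log hs.ne')).congr_deriv (by field_simp; ring)

lemma bk_g_mono {a b : ℝ} (ha : 0 < a) (hab : a ≤ b) :
    besselK 0 a + log a ≤ besselK 0 b + log b := by
  have : MonotoneOn (fun s => besselK 0 s + log s) (Ioi 0) := by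
    refine monotoneOn_of_hasDerivWithinAt_nonneg (f' := fun s => (1 - s * besselK 1 s) / s)
      (convex_Ioi 0)
      (fun s hs => (bk_g_deriv hs).continuousAt.continuousWithinAt) ?_ ?_
    · intro s hs
      rw [interior_Ioi] at hs ⊢
      exact (bk_g_deriv hs).hasDerivWithinAt
    · intro s hs
      rw [interior_Ioi] at hs
      have := bk_x_le hs
      have hs : 0 < s := hs
      exact div_nonneg (by linarith) hs.le
  exact this (mem_Ioi.2 ha) (mem_Ioi.2 (ha.trans_le hab)) hab

lemma bk_g_upper {a b : ℝ} (ha : 0 < a) (hab : a ≤ b) :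
    (besselK 0 b + log b) - (besselK 0 a + log a) ≤ (3 * besselK 0 a + 1) * b ^ 2 / 2 := by
  set M := 3 * besselK 0 a + 1 with hM
  have hM0 : 0 ≤ besselK 0 a := bk_nonneg a
  have hd : ∀ s, 0 < s → HasDerivAt (fun s => (besselK 0 s + log s) - M * s ^ 2 / 2)
      ((1 - s * besselK 1 s) / s - M * s) s := by
    intro s hs
    exact ((bk_g_deriv hs).sub ((((hasDerivAt_id s).pow 2).const_mul M).div_const 2)).congr_deriv
      (by simp; ring)
  have : AntitoneOn (fun s => (besselK 0 s + log s) - M * s ^ 2 / 2) (Ici a) := by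
    refine antitoneOn_of_hasDerivWithinAt_nonpos
      (f' := fun s => (1 - s * besselK 1 s) / s - M * s) (convex_Ici a)
      (fun s hs => (hd s (ha.trans_le hs)).continuousAt.continuousWithinAt) ?_ ?_
    · intro s hs
      rw [interior_Ici] at hs ⊢
      exact (hd s (ha.trans hs)).hasDerivWithinAt
    · intro s hs
      rw [interior_Ici] at hs
      have has : a < s := hs
      have hs : 0 < s := ha.trans has
      have key : 1 - s * besselK 1 s ≤ M * s ^ 2 := by
        rcases le_total s 1 with h | h
        · have h1 := bk_one_sub hs h
          have h2 := bk_anti ha has.le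
          have : 0 ≤ s ^ 2 := by positivity
          nlinarith
        · have h1 : 0 ≤ s * besselK 1 s := by
            rw [bk_eq1]
            refine mul_nonneg hs.le (integral_nonneg fun t => ?_)
            have := cosh_pos t
            positivity
          have : 1 ≤ s ^ 2 := by nlinarith
          nlinarith
      have : (1 - s * besselK 1 s) / s ≤ M * s := by
        rw [div_le_iff₀ hs]; linarith
      linarith
  have := this (mem_Ici.2 le_rfl) (mem_Ici.2 hab) hab
  have h0 : 0 ≤ M * a ^ 2 / 2 := by positivity
  simp only at this
  linarith

lemma bk_lower {z : ℝ} (hz : 0 < z) (h1 : z ≤ 1) : -log z - 1 / 2 ≤ besselK 0 z := by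
  have hL : 0 ≤ -log z := by linarith [log_nonpos hz.le h1]
  rw [bk_eq0]
  have hA : ∫ t in Ioc 0 (-log z), (1 - z * cosh t) ≤ ∫ t in Ioi (0:ℝ), exp (-z * cosh t) := by
    calc _ ≤ ∫ t in Ioc 0 (-log z), exp (-z * cosh t) := by
          refine setIntegral_mono ?_ ((bk_i0 hz).mono_set Ioc_subset_Ioi_self) fun t => ?_
          · exact (Continuous.integrableOn_Icc (by fun_prop)).mono_set Ioc_subset_Icc_self
          · have := one_sub_le_exp_neg (z * cosh t)
            simpa using this
      _ ≤ _ := setIntegral_mono_set (bk_i0 hz)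
          (Eventually.of_forall fun t => (exp_pos _).le) Ioc_subset_Ioi_self.eventuallyLE
  refine le_trans ?_ hA
  rw [← intervalIntegral.integral_of_le hL]
  have : ∫ t in (0:ℝ)..(-log z), (1 - z * cosh t) = -log z - z * sinh (-log z) := by
    rw [intervalIntegral.integral_eq_sub_of_hasDerivAt (f := fun t => t - z * sinh t)]
    · simp
    · intro t _
      exact (hasDerivAt_id t).sub ((hasDerivAt_sinh t).const_mul z)
    · exact Continuous.intervalIntegrable (by fun_prop) _ _
  rw [this, sinh_eq, exp_neg, neg_neg, exp_log hz]
  have : z * ((z⁻¹ - z) / 2) = 1 / 2 - z ^ 2 / 2 := by field_simp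
  rw [this]
  nlinarith [sq_nonneg z]

set_option maxHeartbeats 1000000 in
theorem delta_reg_stokes_tangential_eigenvalue_difference_refined :
    ∃ C : ℝ, 0 < C ∧ ∀ δ : ℝ, Real.sqrt (Real.exp 1) < δ → ∀ ε : ℝ, 0 < ε →
      ∀ k : ℕ, 1 ≤ k → π * ε * (k : ℝ) ≤ 1 / 4 →
      |4 * π ^ 2 * ε * (k : ℝ) * (besselK 1 (π * ε * (k : ℝ))) ^ 2 /
            (2 * besselK 0 (π * ε * (k : ℝ)) * besselK 1 (π * ε * (k : ℝ)) +
              π * ε * (k : ℝ) *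
                ((besselK 0 (π * ε * (k : ℝ))) ^ 2 - (besselK 1 (π * ε * (k : ℝ))) ^ 2)) -
          4 * π / (-1 + 2 * Real.log δ + 2 * besselK 0 (δ * π * ε * (k : ℝ)))| ≤
        C * δ ^ 2 * (1 + Real.log δ) * ε ^ 2 * (k : ℝ) ^ 2 := by
  have hκ : 0 ≤ besselK 0 1 := bk_nonneg 1
  set p := 1 + besselK 0 1 with hp
  set Q := 3 * p + 1 + 10 * p ^ 2 with hQ
  clear_value Q p
  have hp0 : 0 ≤ p := by linarith
  have hQ0 : 0 < Q := by rw [hQ]; positivity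
  refine ⟨16 * π * Q * π ^ 2, by positivity, ?_⟩
  intro δ hδ ε hε k hk hz4
  have hk0 : (0:ℝ) < k := by exact_mod_cast hk
  have hδ1 : 1 < δ := by
    refine lt_trans ?_ hδ
    rw [Real.lt_sqrt (by norm_num)]
    linarith [exp_one_gt_d9]
  have hw : δ * π * ε * (k:ℝ) = δ * (π * ε * k) := by ring
  have hn : 4 * π ^ 2 * ε * (k : ℝ) = 4 * π * (π * ε * k) := by ring
  have hr : 16 * π * Q * π ^ 2 * δ ^ 2 * (1 + Real.log δ) * ε ^ 2 * (k : ℝ) ^ 2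
    = 16 * π * Q * (δ * (π * ε * k)) ^ 2 * (1 + Real.log δ) := by ring
  rw [hw, hn, hr]
  have hz : 0 < π * ε * (k:ℝ) := by positivity
  generalize π * ε * (k:ℝ) = z at *
  have hlogδ : 0 < log δ := log_pos hδ1
  set w := δ * z with hwdef
  have hzw : z ≤ w := by nlinarith
  have hw0 : 0 < w := hz.trans_le hzw
  have hlogw : log w = log δ + log z := log_mul (by positivity) hz.ne'
  set L := -log z with hL
  have hL4 : (1.38:ℝ) ≤ L := by
    have h := log_le_log hz hz4
    have : log (1/4 : ℝ) = - (2 * log 2) := by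
      rw [one_div, log_inv, show (4:ℝ) = 2 ^ 2 by norm_num, log_pow]; norm_num
    have := log_two_gt_d9
    linarith
  have f1 := bk_x_le hz
  have f2 := bk_x_ge hz
  have f3 := bk_one_sub hz (by linarith)
  have f4 := bk_g_mono hz hzw
  have f5 := bk_g_upper hz hzw
  have f6 := bk_lower hz (by linarith)
  have f7 := bk_g_mono hz (show z ≤ 1 by linarith)
  rw [log_one] at f7
  set K := besselK 0 z with hK
  set J := besselK 0 w with hJ
  set x := z * besselK 1 z with hx
  have hK1 : besselK 1 z = x / z := by rw [hx]; field_simp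
  have hx0 : 3 / 4 ≤ x := by linarith
  have hxp : 0 < x := by linarith
  have hK0 : 0 < K := by linarith
  have hKp : K ≤ p * L := by nlinarith
  set A := 2 * K / x - 1 + z ^ 2 * K ^ 2 / x ^ 2 with hA
  set B := -1 + 2 * log δ + 2 * J with hB
  have hA2 : L / 2 ≤ A := by
    have h1 : 2 * K ≤ 2 * K / x := by
      rw [le_div_iff₀ hxp]; nlinarith
    have h2 : 0 ≤ z ^ 2 * K ^ 2 / x ^ 2 := by positivity
    linarith
  have hB2 : L / 2 ≤ B := by linarith
  have hA0 : 0 < A := by linarith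
  have hB0 : 0 < B := by linarith
  have e1 : 4 * π * z * (besselK 1 z) ^ 2 / (2 * K * besselK 1 z + z * (K ^ 2 - (besselK 1 z) ^ 2))
      = 4 * π / A := by
    have hAx : A = (2 * K * x - x ^ 2 + z ^ 2 * K ^ 2) / x ^ 2 := by
      rw [hA]; field_simp
    have hD : 2 * K * (x / z) + z * (K ^ 2 - (x / z) ^ 2) = A * x ^ 2 / z := by
      rw [hAx]; field_simp; ring
    rw [hK1, hD]
    field_simp
  rw [e1]
  clear_value A B K J x w L
  have e2 : 4 * π / A - 4 * π / B = 4 * π * ((B - A) / (A * B)) := by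
    field_simp
  rw [e2, abs_mul, abs_div, abs_of_pos (show 0 < 4 * π by positivity),
    abs_of_pos (mul_pos hA0 hB0)]
  have hBA : |B - A| ≤ Q * L ^ 2 * w ^ 2 := by
    have h1 : B - A = 2 * ((J + log w) - (K + log z)) - 2 * K * ((1 - x) / x)
        - z ^ 2 * K ^ 2 / x ^ 2 := by
      rw [hB, hA, hlogw]; field_simp; ring
    have t1 : (1 - x) / x ≤ 4 * z ^ 2 * K := by
      rw [div_le_iff₀ hxp]
      have : 0 ≤ z ^ 2 * K := by positivity
      nlinarith
    have t1' : 0 ≤ (1 - x) / x := div_nonneg (by linarith) hxp.le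
    have t2 : z ^ 2 * K ^ 2 / x ^ 2 ≤ 2 * (z ^ 2 * K ^ 2) := by
      rw [div_le_iff₀ (by positivity)]
      have : 0 ≤ z ^ 2 * K ^ 2 := by positivity
      have : 1 / 2 ≤ x ^ 2 := by nlinarith
      nlinarith
    have t2' : 0 ≤ z ^ 2 * K ^ 2 / x ^ 2 := by positivity
    have t3 : 2 * K * ((1 - x) / x) ≤ 8 * (z ^ 2 * K ^ 2) := by
      calc _ ≤ 2 * K * (4 * z ^ 2 * K) := by gcongr
        _ = _ := by ring
    have t3' : 0 ≤ 2 * K * ((1 - x) / x) := by positivity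
    have t4 : (3 * K + 1) * w ^ 2 ≤ (3 * p + 1) * L ^ 2 * w ^ 2 := by
      gcongr
      have : 1 ≤ p := by linarith
      nlinarith
    have t5 : z ^ 2 * K ^ 2 ≤ w ^ 2 * (p * L) ^ 2 := by gcongr
    have t6 : Q * L ^ 2 * w ^ 2 = (3 * p + 1) * L ^ 2 * w ^ 2 + 10 * (w ^ 2 * (p * L) ^ 2) := by
      rw [hQ]; ring
    have t7 : 0 ≤ (3 * K + 1) * w ^ 2 := by positivity
    have t8 : 0 ≤ z ^ 2 * K ^ 2 := by positivity
    rw [h1, t6, abs_le]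
    constructor <;> linarith
  have hAB : L ^ 2 / 4 ≤ A * B := by
    calc L ^ 2 / 4 = (L / 2) * (L / 2) := by ring
      _ ≤ A * B := mul_le_mul hA2 hB2 (by linarith) hA0.le
  have hq : |B - A| / (A * B) ≤ 4 * Q * w ^ 2 := by
    rw [div_le_iff₀ (mul_pos hA0 hB0)]
    calc |B - A| ≤ Q * L ^ 2 * w ^ 2 := hBA
      _ = 4 * Q * w ^ 2 * (L ^ 2 / 4) := by ring
      _ ≤ _ := by gcongr
  calc 4 * π * (|B - A| / (A * B)) ≤ 4 * π * (4 * Q * w ^ 2) := by gcongr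
    _ = 16 * π * Q * w ^ 2 * 1 := by ring
    _ ≤ _ := by gcongr; linarith
end
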